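/- arXiv:1603.09468 — 2 statements merged into one kernel-verified Lean document; each statement's English description precedes it below -/
import Mathlib

section
/- Symmetry for the critical system with absorption: Let α ∈ (0,2), n > α, p, s > 1, κ₁, κ₂ > 0, and let (u,v) ∈ (L_α ∩ C^{1,1}_{loc}(ℝ^n))² be a positive solution of (−Δ)^{α/2}u = v^{(n+α)/(n−α)} − κ₁u^p, (−Δ)^{α/2}v = u^{(n+α)/(n−α)} − κ₂v^s on ℝ^n. If u(x) ≲ |x|^{−(n−α)} and v(x) ≲ |x|^{−(n−α)} as |x| → ∞, then u and v are radially symmetric about a common point x₀ ∈ ℝ^n. -/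
open Set MeasureTheory Filter

/-- `F x` is the value of the principal-value fractional Laplacian
`(−Δ)^{α/2} u` (with normalizing constant `C`) at every point `x`. -/
def IsFracLap (n : ℕ) (α C : ℝ) (u F : EuclideanSpace ℝ (Fin n) → ℝ) : Prop :=
  ∀ x, Tendsto
    (fun ε : ℝ => C * ∫ y in {y : EuclideanSpace ℝ (Fin n) | ε ≤ dist x y},
      (u x - u y) / dist x y ^ ((n : ℝ) + α))
    (nhdsWithin 0 (Ioi 0)) (nhds (F x))

/-- Membership in the space `L_α`. -/
def MemLalpha (n : ℕ) (α : ℝ) (u : EuclideanSpace ℝ (Fin n) → ℝ) : Prop :=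
  Integrable (fun x : EuclideanSpace ℝ (Fin n) => |u x| / (1 + ‖x‖ ^ ((n : ℝ) + α)))

/-- `C^{1,1}_{loc}` regularity: `C¹` with locally Lipschitz derivative. -/
def C11loc {n : ℕ} (u : EuclideanSpace ℝ (Fin n) → ℝ) : Prop :=
  ContDiff ℝ 1 u ∧ LocallyLipschitz (fderiv ℝ u)

/-!
The proof is the method of moving planes, run on pointwise principal-value limits. For a unit vector
`e` and `l` very negative, compare `u`, `v` with their reflections across `⟪e, ·⟫ = l`. The
difference `w` of a function and its reflection is antisymmetric, so the kernel paired with its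
mirror image has a sign, and at a negative minimum of `w` over the half space, at distance `d` from
the plane, `(-Δ)^{α/2} w ≤ c d ^ (-α) w`. There the absorption terms help, by monotonicity alone,
and convexity of the powers linearizes the coupling at the smaller of the two differences. Hence
`c ≤ (q v ^ (q - 1) + r u ^ (r - 1)) d ^ α`: by the decay of `u` and `v`, negative minima neither
occur far out nor arbitrarily close to the plane.

The planes therefore start with no negative minimum and can only get stuck where one of the
differences vanishes at an interior point; it then vanishes identically by the strong maximum
principle, and the equation passes this on to the other. So `u` and `v` are symmetric in every
direction, and all planes of symmetry contain the barycenter of a superlevel set of `u`.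
-/

namespace MovingPlanes

open Asymptotics Topology
open scoped InnerProductSpace

section Reflection

variable {E : Type*} [NormedAddCommGroup E] [InnerProductSpace ℝ E] {e x y : E} {l : ℝ}

/-- The reflection `y ↦ y^l` of the moving planes method, across the hyperplane `⟪e, ·⟫ = l` with
unit normal `e`. Composing a linear reflection with a translation makes it an isometric involution
for every `e`. -/
noncomputable def planeReflection (e : E) (l : ℝ) (y : E) : E :=
  (ℝ ∙ e)ᗮ.reflection y + (2 * l) • e

lemma planeReflection_planeReflection (e : E) (l : ℝ) (y : E) :
    planeReflection e l (planeReflection e l y) = y := by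
  simp only [planeReflection, map_add, map_smul, Submodule.reflection_reflection,
    Submodule.reflection_orthogonalComplement_singleton_eq_neg]
  module

lemma dist_planeReflection_planeReflection (e : E) (l : ℝ) (x y : E) :
    dist (planeReflection e l x) (planeReflection e l y) = dist x y := by
  simp only [planeReflection, dist_add_right, LinearIsometryEquiv.dist_map]

lemma planeReflection_eq_add_smul (he : ‖e‖ = 1) (l : ℝ) (y : E) :
    planeReflection e l y = y + (2 * (l - ⟪e, y⟫_ℝ)) • e := by
  rw [planeReflection, Submodule.reflection_orthogonal_apply, Submodule.reflection_singleton_apply]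
  simp only [he, RCLike.ofReal_real_eq_id, id_eq, one_pow, div_one]
  module

lemma continuous_planeReflection_uncurry (e : E) :
    Continuous (Function.uncurry (planeReflection e)) := by
  unfold Function.uncurry planeReflection
  fun_prop

lemma continuous_planeReflection (e : E) (l : ℝ) : Continuous (planeReflection e l) :=
  (continuous_planeReflection_uncurry e).uncurry_left l

lemma inner_planeReflection (he : ‖e‖ = 1) (l : ℝ) (y : E) :
    ⟪e, planeReflection e l y⟫_ℝ = 2 * l - ⟪e, y⟫_ℝ := by
  rw [planeReflection_eq_add_smul he, inner_add_right, inner_smul_right,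
    real_inner_self_eq_norm_sq, he]
  ring

lemma planeReflection_of_inner_eq (he : ‖e‖ = 1) (hy : ⟪e, y⟫_ℝ = l) :
    planeReflection e l y = y := by
  simp [planeReflection_eq_add_smul he, hy]

lemma planeReflection_inner_of_norm_sub_eq {x₀ : E} (hxy : x ≠ y) (h : ‖x - x₀‖ = ‖y - x₀‖) :
    planeReflection (‖x - y‖⁻¹ • (x - y)) ⟪‖x - y‖⁻¹ • (x - y), x₀⟫_ℝ x = y := by
  have he : ‖‖x - y‖⁻¹ • (x - y)‖ = 1 := norm_smul_inv_norm (𝕜 := ℝ) (sub_ne_zero.2 hxy)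
  have hspan : ℝ ∙ (‖x - y‖⁻¹ • (x - y)) = ℝ ∙ (x - y) :=
    Submodule.span_singleton_smul_eq
      (IsUnit.mk0 _ (inv_ne_zero (norm_ne_zero_iff.2 (sub_ne_zero.2 hxy)))) _
  have hrefl : (ℝ ∙ (‖x - y‖⁻¹ • (x - y)))ᗮ.reflection (x - x₀) = y - x₀ := by
    simpa only [hspan, sub_sub_sub_cancel_right] using Submodule.reflection_sub h
  have hfix := planeReflection_of_inner_eq he (y := x₀) rfl
  rw [map_sub] at hrefl
  rw [planeReflection] at hfix ⊢
  rw [sub_eq_iff_eq_add.1 hrefl, ← sub_eq_iff_eq_add'.2 hfix.symm]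
  abel

lemma abs_inner_le_norm_of_norm_eq_one (he : ‖e‖ = 1) (y : E) : |⟪e, y⟫_ℝ| ≤ ‖y‖ := by
  simpa only [he, one_mul] using abs_real_inner_le_norm e y

lemma dist_planeReflection_sq (he : ‖e‖ = 1) (l : ℝ) (x y : E) :
    dist x (planeReflection e l y) ^ 2 =
      dist x y ^ 2 + 4 * (l - ⟪e, x⟫_ℝ) * (l - ⟪e, y⟫_ℝ) := by
  rw [dist_eq_norm, dist_eq_norm, planeReflection_eq_add_smul he, ← sub_sub, norm_sub_sq_real,
    inner_smul_right, norm_smul, he, real_inner_comm e (x - y), inner_sub_right, mul_one,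
    Real.norm_eq_abs, sq_abs]
  ring

lemma dist_le_dist_planeReflection (he : ‖e‖ = 1) (hx : ⟪e, x⟫_ℝ ≤ l) (hy : ⟪e, y⟫_ℝ ≤ l) :
    dist x y ≤ dist x (planeReflection e l y) := by
  have hsq := dist_planeReflection_sq he l x y
  have hprod : 0 ≤ (l - ⟪e, x⟫_ℝ) * (l - ⟪e, y⟫_ℝ) :=
    mul_nonneg (sub_nonneg.2 hx) (sub_nonneg.2 hy)
  exact (pow_le_pow_iff_left₀ dist_nonneg dist_nonneg two_ne_zero).1 (by linarith)

lemma dist_lt_dist_planeReflection (he : ‖e‖ = 1) (hx : ⟪e, x⟫_ℝ < l) (hy : ⟪e, y⟫_ℝ < l) :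
    dist x y < dist x (planeReflection e l y) := by
  have hsq := dist_planeReflection_sq he l x y
  have hprod : 0 < (l - ⟪e, x⟫_ℝ) * (l - ⟪e, y⟫_ℝ) := mul_pos (sub_pos.2 hx) (sub_pos.2 hy)
  exact (pow_lt_pow_iff_left₀ dist_nonneg dist_nonneg two_ne_zero).1 (by linarith)

lemma sub_inner_le_dist_planeReflection (he : ‖e‖ = 1) (hy : ⟪e, y⟫_ℝ ≤ l) :
    l - ⟪e, x⟫_ℝ ≤ dist x (planeReflection e l y) := by
  have h := (le_abs_self _).trans (abs_inner_le_norm_of_norm_eq_one he (planeReflection e l y - x))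
  rw [inner_sub_right, inner_planeReflection he, ← dist_eq_norm, dist_comm] at h
  linarith

variable [MeasurableSpace E] [BorelSpace E]

lemma measurePreserving_planeReflection [FiniteDimensional ℝ E] (e : E) (l : ℝ) :
    MeasurePreserving (planeReflection e l) :=
  (measurePreserving_add_right volume _).comp (LinearIsometryEquiv.measurePreserving _)

lemma measurableEmbedding_planeReflection (e : E) (l : ℝ) :
    MeasurableEmbedding (planeReflection e l) :=
  (Homeomorph.mk ⟨_, _, planeReflection_planeReflection e l, planeReflection_planeReflection e l⟩
    (continuous_planeReflection e l) (continuous_planeReflection e l)).measurableEmbedding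

lemma integral_le_integral_of_planeReflection_pairs [FiniteDimensional ℝ E] (he : ‖e‖ = 1)
    {f g : E → ℝ} (hf : Integrable f) (hg : Integrable g)
    (hfg : ∀ y, ⟪e, y⟫_ℝ ≤ l →
      f y + f (planeReflection e l y) ≤ g y + g (planeReflection e l y)) :
    ∫ y, f y ≤ ∫ y, g y := by
  have hmp := measurePreserving_planeReflection e l
  have hme := measurableEmbedding_planeReflection e l
  have hall : ∀ y, f y + f (planeReflection e l y) ≤ g y + g (planeReflection e l y) := by
    intro y
    rcases le_total ⟪e, y⟫_ℝ l with hy | hy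
    · exact hfg y hy
    · have h := hfg (planeReflection e l y) (by rw [inner_planeReflection he]; linarith)
      rw [planeReflection_planeReflection] at h
      linarith
  have hf' : Integrable fun y => f (planeReflection e l y) := hmp.integrable_comp_of_integrable hf
  have hg' : Integrable fun y => g (planeReflection e l y) := hmp.integrable_comp_of_integrable hg
  have hint := integral_mono (hf.add hf') (hg.add hg') hall
  rw [integral_add' hf hf', integral_add' hg hg', hmp.integral_comp hme,
    hmp.integral_comp hme] at hint
  linarith

end Reflection

section TruncatedIntegral

variable {E : Type*} [NormedAddCommGroup E] [InnerProductSpace ℝ E] [FiniteDimensional ℝ E]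
  [MeasurableSpace E] [BorelSpace E] {a ε M : ℝ} {w : E → ℝ}

/-- The integral over `{y | ε ≤ |x - y|}` whose limit as `ε → 0`, for `a = n + α`, is up to the
normalizing constant the principal value defining `(−Δ)^{α/2} w (x)`. -/
noncomputable def truncatedIntegral (a : ℝ) (w : E → ℝ) (x : E) (ε : ℝ) : ℝ :=
  ∫ y in {y | ε ≤ dist x y}, (w x - w y) / dist x y ^ a

lemma measurableSet_le_dist (x : E) (ε : ℝ) : MeasurableSet {y | ε ≤ dist x y} :=
  measurableSet_le measurable_const (by fun_prop)

lemma inv_rpow_le_mul_one_add_rpow {t : ℝ} (hε : 0 < ε) (ht : ε ≤ t) (ha : 0 ≤ a) :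
    (t ^ a)⁻¹ ≤ ((1 + ε) / ε) ^ a * (1 + t) ^ (-a) := by
  have ht₀ : 0 < t := hε.trans_le ht
  rw [Real.rpow_neg (by positivity), ← Real.inv_rpow ht₀.le, ← Real.inv_rpow (by positivity),
    ← Real.mul_rpow (by positivity) (by positivity)]
  refine Real.rpow_le_rpow (by positivity) ?_ ha
  rw [← div_eq_mul_inv, div_div, inv_eq_one_div, div_le_div_iff₀ ht₀ (by positivity)]
  linarith

lemma integrableOn_truncatedIntegrand (ha : (Module.finrank ℝ E : ℝ) < a)
    (hw : AEStronglyMeasurable w) (hM : ∀ y, |w y| ≤ M) (x : E) (hε : 0 < ε) :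
    IntegrableOn (fun y => (w x - w y) / dist x y ^ a) {y | ε ≤ dist x y} := by
  have ha₀ : 0 ≤ a := (Nat.cast_nonneg _).trans ha.le
  have hdom : Integrable fun y : E =>
      2 * M * (((1 + ε) / ε) ^ a * (1 + ‖y - x‖) ^ (-a)) :=
    (((integrable_one_add_norm ha).comp_sub_right x).const_mul _).const_mul _
  refine hdom.integrableOn.mono' ?_ ?_
  · exact ((aestronglyMeasurable_const.sub hw).div₀
      (by fun_prop : Measurable fun y => dist x y ^ a).aestronglyMeasurable).restrict
  · refine (ae_restrict_iff' (measurableSet_le_dist x ε)).2 (.of_forall fun y hy => ?_)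
    have hnum : |w x - w y| ≤ 2 * M := (abs_sub _ _).trans (by linarith [hM x, hM y])
    rw [norm_div, Real.norm_eq_abs, Real.norm_of_nonneg (by positivity), div_eq_mul_inv,
      ← dist_eq_norm, dist_comm y x]
    exact mul_le_mul hnum (inv_rpow_le_mul_one_add_rpow hε hy ha₀) (by positivity)
      ((abs_nonneg _).trans hnum)

lemma truncatedIntegral_planeReflection (e : E) (l : ℝ) (a : ℝ) (w : E → ℝ) (x : E) (ε : ℝ) :
    truncatedIntegral a w (planeReflection e l x) ε =
      truncatedIntegral a (w ∘ planeReflection e l) x ε := by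
  rw [truncatedIntegral, ← (measurePreserving_planeReflection e l).setIntegral_preimage_emb
    (measurableEmbedding_planeReflection e l)]
  simp only [preimage_ofPred_eq, dist_planeReflection_planeReflection, truncatedIntegral,
    Function.comp_apply]

lemma truncatedIntegral_sub (ha : (Module.finrank ℝ E : ℝ) < a) {w' : E → ℝ} {M' : ℝ}
    (hw : AEStronglyMeasurable w) (hM : ∀ y, |w y| ≤ M) (hw' : AEStronglyMeasurable w')
    (hM' : ∀ y, |w' y| ≤ M') (x : E) (hε : 0 < ε) :
    truncatedIntegral a (w - w') x ε = truncatedIntegral a w x ε - truncatedIntegral a w' x ε := by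
  simp only [truncatedIntegral]
  rw [← integral_sub (integrableOn_truncatedIntegrand ha hw hM x hε)
    (integrableOn_truncatedIntegrand ha hw' hM' x hε)]
  congr 2 with y
  simp only [Pi.sub_apply]
  ring

lemma measureReal_ball_eq_pow_mul [Nontrivial E] (x : E) {r : ℝ} (hr : 0 ≤ r) :
    volume.real (Metric.ball x r) =
      r ^ Module.finrank ℝ E * volume.real (Metric.ball (0 : E) 1) := by
  rw [measureReal_def, Measure.addHaar_ball volume x hr, ENNReal.toReal_mul,
    ENNReal.toReal_ofReal (pow_nonneg hr _), measureReal_def]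

end TruncatedIntegral

section AntisymmetricMinimum

variable {E : Type*} [NormedAddCommGroup E] [InnerProductSpace ℝ E] {e x y : E} {l a ε M : ℝ}
  {w : E → ℝ}

/-- `w` is a bounded continuous function, antisymmetric under the reflection in the hyperplane
`⟪e, ·⟫ = l`, whose minimum over the half-space `⟪e, ·⟫ ≤ l` is nonpositive and attained at the
interior point `x`. -/
structure IsNonposMin (e : E) (l : ℝ) (w : E → ℝ) (x : E) : Prop where
  norm_eq_one : ‖e‖ = 1
  continuous : Continuous w
  bounded : ∃ M, ∀ y, |w y| ≤ M
  antisymm : ∀ y, w (planeReflection e l y) = -w y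
  inner_lt : ⟪e, x⟫_ℝ < l
  nonpos : w x ≤ 0
  le : ∀ y, ⟪e, y⟫_ℝ ≤ l → w x ≤ w y

/-- The joint contribution, with reversed sign, of `y` and its reflection to the integral defining
the fractional Laplacian at `x` of an antisymmetric function `w`. -/
noncomputable def pairGain (a : ℝ) (e : E) (l : ℝ) (w : E → ℝ) (x y : E) : ℝ :=
  (w y - w x) * ((dist x y ^ a)⁻¹ - (dist x (planeReflection e l y) ^ a)⁻¹) -
    2 * w x / dist x (planeReflection e l y) ^ a

lemma continuousAt_pairGain (hw : Continuous w) (hxy : x ≠ y)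
    (hxρ : x ≠ planeReflection e l y) : ContinuousAt (pairGain a e l w x) y := by
  have hρ := continuous_planeReflection e l
  have hdist : ContinuousAt (fun z => dist x z ^ a) y :=
    ContinuousAt.rpow_const (by fun_prop) (.inl (dist_pos.2 hxy).ne')
  have hdistρ : ContinuousAt (fun z => dist x (planeReflection e l z) ^ a) y :=
    ContinuousAt.rpow_const (by fun_prop) (.inl (dist_pos.2 hxρ).ne')
  have hpos := (Real.rpow_pos_of_pos (dist_pos.2 hxy) a).ne'
  have hposρ := (Real.rpow_pos_of_pos (dist_pos.2 hxρ) a).ne'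
  unfold pairGain
  fun_prop (disch := assumption)

lemma inv_dist_planeReflection_rpow_le (he : ‖e‖ = 1) (ha : 0 ≤ a) (hx : ⟪e, x⟫_ℝ ≤ l)
    (hy : ⟪e, y⟫_ℝ ≤ l) (hxy : x ≠ y) :
    (dist x (planeReflection e l y) ^ a)⁻¹ ≤ (dist x y ^ a)⁻¹ :=
  inv_anti₀ (Real.rpow_pos_of_pos (dist_pos.2 hxy) a)
    (Real.rpow_le_rpow dist_nonneg (dist_le_dist_planeReflection he hx hy) ha)

lemma dist_planeReflection_mem_ball_le (he : ‖e‖ = 1) (hx : ⟪e, x⟫_ℝ < l)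
    (hy : y ∈ Metric.ball (x - (l - ⟪e, x⟫_ℝ) • e) ((l - ⟪e, x⟫_ℝ) / 2)) :
    ⟪e, y⟫_ℝ < l ∧ (l - ⟪e, x⟫_ℝ) / 2 ≤ dist x y ∧
      dist x (planeReflection e l y) ≤ 4 * (l - ⟪e, x⟫_ℝ) := by
  set d := l - ⟪e, x⟫_ℝ
  have hd₀ : 0 < d := sub_pos.2 hx
  have hyc : dist y (x - d • e) < d / 2 := hy
  have hinner : ⟪e, x - d • e⟫_ℝ = l - 2 * d := by
    rw [inner_sub_right, inner_smul_right, real_inner_self_eq_norm_sq, he]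
    simp only [d]
    ring
  have hxc : dist x (x - d • e) = d := by
    rw [dist_self_sub_right, norm_smul, he, mul_one, Real.norm_of_nonneg hd₀.le]
  have hxρ : dist x (planeReflection e l (x - d • e)) = 3 * d := by
    have hρ : planeReflection e l (x - d • e) = x + (3 * d) • e := by
      rw [planeReflection_eq_add_smul he, hinner]
      module
    rw [hρ, dist_self_add_right, norm_smul, he, mul_one, Real.norm_of_nonneg (by positivity)]
  refine ⟨?_, ?_, ?_⟩
  · have h := (le_abs_self _).trans (abs_inner_le_norm_of_norm_eq_one he (y - (x - d • e)))
    rw [inner_sub_right, hinner, ← dist_eq_norm] at h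
    linarith
  · linarith [dist_triangle x y (x - d • e)]
  · linarith [dist_triangle x (planeReflection e l (x - d • e)) (planeReflection e l y),
      dist_planeReflection_planeReflection e l (x - d • e) y, dist_comm y (x - d • e)]

namespace IsNonposMin

lemma neg_two_mul_div_le_pairGain (h : IsNonposMin e l w x) (ha : 0 ≤ a) (hy : ⟪e, y⟫_ℝ ≤ l)
    (hxy : x ≠ y) :
    -2 * w x / dist x (planeReflection e l y) ^ a ≤ pairGain a e l w x y := by
  have hgap := mul_nonneg (sub_nonneg.2 (h.le y hy)) (sub_nonneg.2
    (inv_dist_planeReflection_rpow_le h.norm_eq_one ha h.inner_lt.le hy hxy))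
  rw [pairGain, neg_mul, neg_div]
  linarith

lemma pairGain_nonneg (h : IsNonposMin e l w x) (ha : 0 ≤ a) (hy : ⟪e, y⟫_ℝ ≤ l)
    (hxy : x ≠ y) : 0 ≤ pairGain a e l w x y :=
  (div_nonneg (by linarith [h.nonpos]) (by positivity)).trans
    (h.neg_two_mul_div_le_pairGain ha hy hxy)

lemma pair_le (h : IsNonposMin e l w x) (ha : 0 ≤ a) (hM : ∀ y, |w y| ≤ M) {B : Set E}
    (hBx : ∀ y ∈ B, ε ≤ dist x y) {c : ℝ} (hc : ∀ y ∈ B, c ≤ pairGain a e l w x y)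
    (hε : 0 < ε) (hy : ⟪e, y⟫_ℝ ≤ l) :
    {y | ε ≤ dist x y}.indicator (fun y => (w x - w y) / dist x y ^ a) y +
        (w x + w y) / dist x (planeReflection e l y) ^ a ≤
      (Metric.ball x ε).indicator (fun _ => 2 * M / (l - ⟪e, x⟫_ℝ) ^ a) y +
        B.indicator (fun _ => -c) y := by
  by_cases hfar : ε ≤ dist x y
  · have hball : y ∉ Metric.ball x ε := by rwa [Metric.mem_ball', not_lt]
    have hpair : (w x - w y) / dist x y ^ a + (w x + w y) / dist x (planeReflection e l y) ^ a =
        -pairGain a e l w x y := by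
      unfold pairGain
      ring
    rw [indicator_of_mem (by exact hfar), indicator_of_notMem hball, zero_add, hpair]
    by_cases hyB : y ∈ B
    · rw [indicator_of_mem hyB]
      exact neg_le_neg (hc y hyB)
    · rw [indicator_of_notMem hyB]
      exact neg_nonpos.2 (h.pairGain_nonneg ha hy (dist_pos.1 (hε.trans_le hfar)))
  · have hball : y ∈ Metric.ball x ε := Metric.mem_ball'.2 (not_le.1 hfar)
    rw [indicator_of_notMem (by exact hfar), indicator_of_mem hball,
      indicator_of_notMem (fun hyB => hfar (hBx y hyB)), zero_add, add_zero]
    have hd := sub_pos.2 h.inner_lt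
    exact div_le_div₀ (by linarith [(abs_nonneg _).trans (hM x)])
      (by linarith [le_of_abs_le (hM x), le_of_abs_le (hM y)]) (by positivity)
      (Real.rpow_le_rpow hd.le (sub_inner_le_dist_planeReflection h.norm_eq_one hy) ha)

variable [FiniteDimensional ℝ E] [MeasurableSpace E] [BorelSpace E]

lemma truncatedIntegral_le (h : IsNonposMin e l w x) (ha : (Module.finrank ℝ E : ℝ) < a)
    (hM : ∀ y, |w y| ≤ M) {B : Set E} (hB : MeasurableSet B) (hBfin : volume B ≠ ⊤)
    (hBl : ∀ y ∈ B, ⟪e, y⟫_ℝ < l) (hBx : ∀ y ∈ B, ε ≤ dist x y) {c : ℝ}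
    (hc : ∀ y ∈ B, c ≤ pairGain a e l w x y) (hε : 0 < ε) (hεl : ε ≤ l - ⟪e, x⟫_ℝ) :
    truncatedIntegral a w x ε ≤
      2 * M / (l - ⟪e, x⟫_ℝ) ^ a * volume.real (Metric.ball x ε) - c * volume.real B := by
  have ha₀ : 0 ≤ a := (Nat.cast_nonneg _).trans ha.le
  set N := 2 * M / (l - ⟪e, x⟫_ℝ) ^ a
  have hN : 0 ≤ N := div_nonneg (by linarith [(abs_nonneg _).trans (hM x)])
    (Real.rpow_nonneg (sub_nonneg.2 h.inner_lt.le) a)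
  have hball : Integrable ((Metric.ball x ε).indicator fun _ => N) :=
    (integrable_indicator_iff measurableSet_ball).2 (integrableOn_const measure_ball_lt_top.ne)
  have hBint : Integrable (B.indicator fun _ => -c) :=
    (integrable_indicator_iff hB).2 (integrableOn_const hBfin)
  have htrunc : Integrable
      ({y | ε ≤ dist x y}.indicator fun y => (w x - w y) / dist x y ^ a) :=
    (integrable_indicator_iff (measurableSet_le_dist x ε)).2
      (integrableOn_truncatedIntegrand ha h.continuous.aestronglyMeasurable hM x hε)
  calc truncatedIntegral a w x ε
    _ = ∫ y, {y | ε ≤ dist x y}.indicator (fun y => (w x - w y) / dist x y ^ a) y :=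
        (integral_indicator (measurableSet_le_dist x ε)).symm
    _ ≤ ∫ y, ((Metric.ball x ε).indicator (fun _ => N) y + B.indicator (fun _ => -c) y) := by
        refine integral_le_integral_of_planeReflection_pairs (l := l) h.norm_eq_one htrunc
          (hball.add hBint) fun y hy => ?_
        have hfar : ε ≤ dist x (planeReflection e l y) :=
          hεl.trans (sub_inner_le_dist_planeReflection h.norm_eq_one hy)
        have hrefl : planeReflection e l y ∉ B := fun hmem => by
          have := hBl _ hmem
          rw [inner_planeReflection h.norm_eq_one] at this
          linarith
        rw [indicator_of_mem (a := planeReflection e l y) (by exact hfar), h.antisymm,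
          sub_neg_eq_add, indicator_of_notMem hrefl, add_zero]
        exact (h.pair_le ha₀ hM hBx hc hε hy).trans
          (le_add_of_nonneg_right (indicator_nonneg (fun _ _ => hN) _))
    _ = N * volume.real (Metric.ball x ε) - c * volume.real B := by
        rw [integral_add hball hBint, integral_indicator measurableSet_ball,
          integral_indicator hB, setIntegral_const, setIntegral_const, smul_eq_mul, smul_eq_mul]
        ring

lemma le_neg_mul_measureReal (h : IsNonposMin e l w x) (ha : (Module.finrank ℝ E : ℝ) < a)
    {C F : ℝ} (hC : 0 ≤ C)
    (hF : Tendsto (fun ε => C * truncatedIntegral a w x ε) (𝓝[>] 0) (𝓝 F))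
    {B : Set E} (hB : MeasurableSet B) (hBfin : volume B ≠ ⊤)
    (hBl : ∀ y ∈ B, ⟪e, y⟫_ℝ < l) {r : ℝ} (hr : 0 < r) (hBx : ∀ y ∈ B, r ≤ dist x y) {c : ℝ}
    (hc : ∀ y ∈ B, c ≤ pairGain a e l w x y) :
    F ≤ -(C * (c * volume.real B)) := by
  obtain ⟨M, hM⟩ := h.bounded
  have : Nontrivial E := ⟨e, 0, fun he => by simpa [he] using h.norm_eq_one⟩
  have hvol : Tendsto (fun ε => volume.real (Metric.ball x ε)) (𝓝[>] 0) (𝓝 0) := by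
    have hpow : Tendsto (fun ε : ℝ => ε ^ Module.finrank ℝ E *
        volume.real (Metric.ball (0 : E) 1)) (𝓝[>] 0) (𝓝 0) := by
      have hcont : Continuous fun ε : ℝ => ε ^ Module.finrank ℝ E *
        volume.real (Metric.ball (0 : E) 1) := by fun_prop
      simpa [Module.finrank_pos.ne'] using (hcont.tendsto 0).mono_left nhdsWithin_le_nhds
    refine hpow.congr' ?_
    filter_upwards [self_mem_nhdsWithin] with ε hε
    rw [measureReal_ball_eq_pow_mul x (le_of_lt hε)]
  have hlim := ((hvol.const_mul (2 * M / (l - ⟪e, x⟫_ℝ) ^ a)).sub_const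
    (c * volume.real B)).const_mul C
  rw [mul_zero, zero_sub, mul_neg] at hlim
  refine le_of_tendsto_of_tendsto hF hlim ?_
  filter_upwards [self_mem_nhdsWithin, nhdsWithin_le_nhds (Iic_mem_nhds (sub_pos.2 h.inner_lt)),
    nhdsWithin_le_nhds (Iic_mem_nhds hr)] with ε hε hεl hεr
  exact mul_le_mul_of_nonneg_left (h.truncatedIntegral_le ha hM hB hBfin hBl
    (fun y hy => le_trans hεr (hBx y hy)) hc hε hεl) hC

lemma rpow_mul_le (h : IsNonposMin e l w x) (ha : (Module.finrank ℝ E : ℝ) < a) {C F : ℝ}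
    (hC : 0 ≤ C) (hF : Tendsto (fun ε => C * truncatedIntegral a w x ε) (𝓝[>] 0) (𝓝 F)) :
    (l - ⟪e, x⟫_ℝ) ^ (a - Module.finrank ℝ E) * F ≤
      2 * C * volume.real (Metric.ball (0 : E) 1) / (2 ^ Module.finrank ℝ E * 4 ^ a) * w x := by
  have : Nontrivial E := ⟨e, 0, fun he => by simpa [he] using h.norm_eq_one⟩
  set d := l - ⟪e, x⟫_ℝ
  have hd : 0 < d := sub_pos.2 h.inner_lt
  have ha₀ : 0 ≤ a := (Nat.cast_nonneg _).trans ha.le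
  have hball := fun y => dist_planeReflection_mem_ball_le (y := y) h.norm_eq_one h.inner_lt
  have hgain : ∀ y ∈ Metric.ball (x - d • e) (d / 2),
      -2 * w x / (4 * d) ^ a ≤ pairGain a e l w x y := by
    intro y hy
    obtain ⟨hyl, hxy, hxρ⟩ := hball y hy
    have hxy₀ : 0 < dist x y := (half_pos hd).trans_le hxy
    have hxρ₀ := hxy₀.trans_le (dist_le_dist_planeReflection h.norm_eq_one h.inner_lt.le hyl.le)
    exact (div_le_div_of_nonneg_left (by linarith [h.nonpos]) (Real.rpow_pos_of_pos hxρ₀ a)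
      (Real.rpow_le_rpow hxρ₀.le hxρ ha₀)).trans
      (h.neg_two_mul_div_le_pairGain ha₀ hyl.le (dist_pos.1 hxy₀))
  have hle := h.le_neg_mul_measureReal ha hC hF measurableSet_ball measure_ball_lt_top.ne
    (fun y hy => (hball y hy).1) (half_pos hd) (fun y hy => (hball y hy).2.1) hgain
  rw [measureReal_ball_eq_pow_mul _ (half_pos hd).le] at hle
  refine (mul_le_mul_of_nonneg_left hle (Real.rpow_nonneg hd.le _)).trans_eq ?_
  rw [Real.rpow_sub hd, Real.rpow_natCast, Real.mul_rpow zero_le_four hd.le, div_pow]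
  have hda := (Real.rpow_pos_of_pos hd a).ne'
  field_simp

lemma eq_zero_of_eq_zero (h : IsNonposMin e l w x) (ha : (Module.finrank ℝ E : ℝ) < a) {C F : ℝ}
    (hC : 0 < C) (hF : Tendsto (fun ε => C * truncatedIntegral a w x ε) (𝓝[>] 0) (𝓝 F))
    (hx : w x = 0) (hF₀ : 0 ≤ F) (hy : ⟪e, y⟫_ℝ < l) : w y = 0 := by
  by_contra hne
  have hwy : 0 < w y := lt_of_le_of_ne (hx ▸ h.le y hy.le) (Ne.symm hne)
  have hxy : 0 < dist x y := dist_pos.2 fun heq => hne (heq ▸ hx)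
  have ha₀ : 0 < a := (Nat.cast_nonneg _).trans_lt ha
  have hlt := dist_lt_dist_planeReflection h.norm_eq_one h.inner_lt hy
  have hgain : 0 < pairGain a e l w x y := by
    rw [pairGain, hx, mul_zero, zero_div, sub_zero, sub_zero]
    exact mul_pos hwy (sub_pos.2 (inv_strictAnti₀ (Real.rpow_pos_of_pos hxy a)
      (Real.rpow_lt_rpow hxy.le hlt ha₀)))
  have hcont : ContinuousAt (pairGain a e l w x) y :=
    continuousAt_pairGain h.continuous (dist_pos.1 hxy) (dist_pos.1 (hxy.trans hlt))
  have hinner : Continuous fun z => ⟪e, z⟫_ℝ := by fun_prop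
  have hdist : Continuous fun z => dist x z := by fun_prop
  obtain ⟨δ, hδ, hball⟩ := Metric.eventually_nhds_iff_ball.1
    ((hcont.eventually_const_lt (half_lt_self hgain)).and ((hinner.continuousAt.eventually_lt_const
      hy).and (hdist.continuousAt.eventually_const_lt (half_lt_self hxy))))
  have hle := h.le_neg_mul_measureReal ha hC.le hF measurableSet_ball measure_ball_lt_top.ne
    (fun z hz => (hball z hz).2.1) (half_pos hxy) (fun z hz => (hball z hz).2.2.le)
    (fun z hz => (hball z hz).1.le)
  have hvol : 0 < volume.real (Metric.ball y δ) :=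
    ENNReal.toReal_pos (Metric.measure_ball_pos volume y hδ).ne' measure_ball_lt_top.ne
  linarith [mul_pos hC (mul_pos (half_pos hgain) hvol)]

end IsNonposMin

end AntisymmetricMinimum

section ReflectedDifferences

variable {E : Type*} [NormedAddCommGroup E] [InnerProductSpace ℝ E] {e x y : E} {l M : ℝ}
  {u v : E → ℝ}

/-- `u^l - u`, where `u^l` is the reflection of `u` in the hyperplane `⟪e, ·⟫ = l`; often written
`U_l` or `w_l` in the method of moving planes. -/
noncomputable def reflDiff (e : E) (l : ℝ) (u : E → ℝ) (y : E) : ℝ :=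
  u (planeReflection e l y) - u y

lemma reflDiff_planeReflection (e : E) (l : ℝ) (u : E → ℝ) (y : E) :
    reflDiff e l u (planeReflection e l y) = -reflDiff e l u y := by
  rw [reflDiff, reflDiff, planeReflection_planeReflection, neg_sub]

lemma reflDiff_of_inner_eq (he : ‖e‖ = 1) (hy : ⟪e, y⟫_ℝ = l) : reflDiff e l u y = 0 := by
  rw [reflDiff, planeReflection_of_inner_eq he hy, sub_self]

lemma reflDiff_eq_zero_of_half_space (he : ‖e‖ = 1)
    (h : ∀ y, ⟪e, y⟫_ℝ < l → reflDiff e l u y = 0) (y : E) : reflDiff e l u y = 0 := by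
  rcases lt_trichotomy ⟪e, y⟫_ℝ l with hy | hy | hy
  · exact h y hy
  · exact reflDiff_of_inner_eq he hy
  · rw [← neg_eq_zero, ← reflDiff_planeReflection]
    exact h _ (by rw [inner_planeReflection he]; linarith)

lemma continuous_reflDiff_uncurry (hu : Continuous u) (e : E) :
    Continuous (Function.uncurry fun l => reflDiff e l u) :=
  (hu.comp (continuous_planeReflection_uncurry e)).sub (hu.comp continuous_snd)

lemma abs_reflDiff_le (hM : ∀ y, |u y| ≤ M) (e : E) (l : ℝ) (y : E) :
    |reflDiff e l u y| ≤ 2 * M :=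
  (abs_sub _ _).trans (by linarith [hM y, hM (planeReflection e l y)])

/-- The smaller of the two reflected differences: it is nonnegative on a half-space exactly when
both unknowns of the system increase under reflection there. -/
noncomputable def minDiff (u v : E → ℝ) (e : E) (l : ℝ) (y : E) : ℝ :=
  min (reflDiff e l u y) (reflDiff e l v y)

lemma minDiff_comm (u v : E → ℝ) (e : E) (l : ℝ) : minDiff v u e l = minDiff u v e l :=
  funext fun _ => min_comm _ _

lemma minDiff_of_inner_eq (he : ‖e‖ = 1) (hy : ⟪e, y⟫_ℝ = l) : minDiff u v e l y = 0 := by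
  rw [minDiff, reflDiff_of_inner_eq he hy, reflDiff_of_inner_eq he hy, min_self]

lemma continuous_minDiff_uncurry (hu : Continuous u) (hv : Continuous v) (e : E) :
    Continuous (Function.uncurry (minDiff u v e)) := by
  have hU := continuous_reflDiff_uncurry hu e
  have hV := continuous_reflDiff_uncurry hv e
  exact hU.min hV

lemma continuous_minDiff (hu : Continuous u) (hv : Continuous v) (e : E) (l : ℝ) :
    Continuous (minDiff u v e l) :=
  (continuous_minDiff_uncurry hu hv e).uncurry_left l

lemma isNonposMin_reflDiff (he : ‖e‖ = 1) (hu : Continuous u) (hM : ∀ y, |u y| ≤ M)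
    (hx : ⟪e, x⟫_ℝ < l) (hneg : reflDiff e l u x ≤ 0)
    (hmin : ∀ y, ⟪e, y⟫_ℝ ≤ l → reflDiff e l u x ≤ reflDiff e l u y) :
    IsNonposMin e l (reflDiff e l u) x where
  norm_eq_one := he
  continuous := (continuous_reflDiff_uncurry hu e).uncurry_left l
  bounded := ⟨2 * M, abs_reflDiff_le hM e l⟩
  antisymm := reflDiff_planeReflection e l u
  inner_lt := hx
  nonpos := hneg
  le := hmin

/-- `x` is an interior point of the half-space `⟪e, ·⟫ ≤ l` where `minDiff u v e l` attains its
minimum over that half-space, and this minimum is negative. -/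
structure IsNegMin (u v : E → ℝ) (e : E) (l : ℝ) (x : E) : Prop where
  inner_lt : ⟪e, x⟫_ℝ < l
  neg : minDiff u v e l x < 0
  le : ∀ y, ⟪e, y⟫_ℝ ≤ l → minDiff u v e l x ≤ minDiff u v e l y

lemma IsNegMin.symm (h : IsNegMin u v e l x) : IsNegMin v u e l x := by
  constructor
  · exact h.inner_lt
  · simpa only [minDiff_comm] using h.neg
  · simpa only [minDiff_comm] using h.le

/-- A positive continuous function vanishing at infinity. -/
structure IsPosC0 {X : Type*} [TopologicalSpace X] (u : X → ℝ) : Prop where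
  continuous : Continuous u
  pos : ∀ y, 0 < u y
  tendsto_zero : Tendsto u (cocompact X) (𝓝 0)

lemma IsPosC0.bounded {X : Type*} [TopologicalSpace X] {u : X → ℝ} (hu : IsPosC0 u) :
    ∃ M, ∀ y, |u y| ≤ M := by
  obtain ⟨M, hM⟩ := isBounded_iff_forall_norm_le.1
    (ZeroAtInftyContinuousMap.isBounded_range ⟨⟨u, hu.continuous⟩, hu.tendsto_zero⟩)
  exact ⟨M, fun y => hM _ (mem_range_self y)⟩

lemma exists_isNegMin (he : ‖e‖ = 1) (hu : IsPosC0 u) (hv : IsPosC0 v) (hy : ⟪e, y⟫_ℝ < l)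
    (hneg : minDiff u v e l y < 0) : ∃ x, IsNegMin u v e l x := by
  have hclosed : IsClosed {z : E | ⟪e, z⟫_ℝ ≤ l} := isClosed_le (by fun_prop) continuous_const
  have hcont := continuous_minDiff hu.continuous hv.continuous e l
  have hfar : ∀ᶠ z in cocompact E, minDiff u v e l y ≤ minDiff u v e l z := by
    filter_upwards [hu.tendsto_zero.eventually_lt_const (neg_pos.2 hneg),
      hv.tendsto_zero.eventually_lt_const (neg_pos.2 hneg)] with z huz hvz
    refine le_min ?_ ?_ <;> unfold reflDiff
    · linarith [hu.pos (planeReflection e l z)]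
    · linarith [hv.pos (planeReflection e l z)]
  obtain ⟨x, hx, hmin⟩ := hcont.continuousOn.exists_isMinOn' hclosed
    (show y ∈ {z : E | ⟪e, z⟫_ℝ ≤ l} from hy.le) (hfar.filter_mono inf_le_left)
  have hxneg : minDiff u v e l x < 0 := (hmin hy.le).trans_lt hneg
  exact ⟨x, lt_of_le_of_ne hx fun h => hxneg.ne (minDiff_of_inner_eq he h), hxneg,
    fun z hz => hmin hz⟩

end ReflectedDifferences

section MovingThePlane

variable {E : Type*} [NormedAddCommGroup E] [InnerProductSpace ℝ E] {e x : E}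
  {l α c : ℝ} {u v G : E → ℝ}

/-- The positions `l` of the plane for which both unknowns increase under reflection on the whole
half-space `⟪e, ·⟫ < l`. The plane is moved up to the supremum of this set. -/
def planePositions (u v : E → ℝ) (e : E) : Set ℝ :=
  {l | ∀ y, ⟪e, y⟫_ℝ < l → 0 ≤ minDiff u v e l y}

lemma exists_isNegMin_of_notMem_planePositions (he : ‖e‖ = 1) (hu : IsPosC0 u) (hv : IsPosC0 v)
    (hl : l ∉ planePositions u v e) : ∃ x, IsNegMin u v e l x := by
  simp only [planePositions, mem_ofPred_eq, not_forall, not_le] at hl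
  obtain ⟨y, hy, hneg⟩ := hl
  exact exists_isNegMin he hu hv hy hneg

lemma isClosed_planePositions (hu : Continuous u) (hv : Continuous v) (e : E) :
    IsClosed (planePositions u v e) := by
  simp only [planePositions, ofPred_forall]
  exact isClosed_iInter fun y => isClosed_imp isOpen_Ioi
    (isClosed_le continuous_const ((continuous_minDiff_uncurry hu hv e).uncurry_right y))

lemma bddAbove_planePositions [ProperSpace E] (he : ‖e‖ = 1) (hu : IsPosC0 u) :
    BddAbove (planePositions u v e) := by
  have hline : Tendsto (fun t : ℝ => (2 * t) • e) atTop (cocompact E) := by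
    rw [← Metric.cobounded_eq_cocompact, ← tendsto_norm_atTop_iff_cobounded]
    simp only [norm_smul, he, mul_one]
    exact tendsto_norm_atTop_atTop.comp (tendsto_id.const_mul_atTop two_pos)
  obtain ⟨T, hT⟩ := eventually_atTop.1
    (((hu.tendsto_zero.comp hline).eventually_lt_const (hu.pos 0)).and (eventually_gt_atTop 0))
  refine ⟨T, fun l hl => ?_⟩
  by_contra! hlt
  obtain ⟨hsmall, hl₀⟩ := hT l hlt.le
  have hnonneg : 0 ≤ reflDiff e l u 0 :=
    (hl 0 (by rwa [inner_zero_right])).trans (min_le_left _ _)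
  rw [reflDiff, planeReflection_eq_add_smul he, inner_zero_right, sub_zero, zero_add] at hnonneg
  simp only [Function.comp_apply] at hsmall
  linarith

lemma exists_norm_le_of_isNegMin [ProperSpace E] (he : ‖e‖ = 1) (hα : 0 ≤ α) (hc : 0 < c)
    (hG : ∀ x, 0 ≤ G x) (hG₀ : Tendsto (fun x => G x * ‖x‖ ^ α) (cocompact E) (𝓝 0))
    (hbound : ∀ l x, IsNegMin u v e l x → c ≤ G x * (l - ⟪e, x⟫_ℝ) ^ α) :
    ∃ R, ∀ l x, IsNegMin u v e l x → ‖x‖ ≤ max R |l| := by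
  have hlim := hG₀.mul_const (2 ^ α)
  rw [zero_mul, ← Metric.cobounded_eq_cocompact] at hlim
  obtain ⟨R, -, hR⟩ := (hasBasis_cobounded_norm.eventually_iff).1 (hlim.eventually_lt_const hc)
  refine ⟨R, fun l x hx => ?_⟩
  by_contra! hlt
  obtain ⟨hRx, hlx⟩ := max_lt_iff.1 hlt
  have hd : l - ⟪e, x⟫_ℝ ≤ 2 * ‖x‖ := by
    linarith [le_abs_self l, neg_le_of_abs_le (abs_inner_le_norm_of_norm_eq_one he x)]
  refine (hR hRx.le).not_ge ?_
  calc c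
    _ ≤ G x * (l - ⟪e, x⟫_ℝ) ^ α := hbound l x hx
    _ ≤ G x * (2 * ‖x‖) ^ α := mul_le_mul_of_nonneg_left
        (Real.rpow_le_rpow (sub_nonneg.2 hx.inner_lt.le) hd hα) (hG x)
    _ = G x * ‖x‖ ^ α * 2 ^ α := by
        rw [Real.mul_rpow zero_le_two (norm_nonneg x)]
        ring

lemma nonempty_planePositions (he : ‖e‖ = 1) (hu : IsPosC0 u) (hv : IsPosC0 v) {R : ℝ}
    (hR : ∀ l x, IsNegMin u v e l x → ‖x‖ ≤ max R |l|) : (planePositions u v e).Nonempty := by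
  refine ⟨-|R|, ?_⟩
  by_contra hl
  obtain ⟨x, hx⟩ := exists_isNegMin_of_notMem_planePositions he hu hv hl
  have hxR := hR _ x hx
  rw [abs_neg, abs_abs, max_eq_right (le_abs_self R)] at hxR
  linarith [hx.inner_lt, neg_le_of_abs_le (abs_inner_le_norm_of_norm_eq_one he x)]

lemma inner_lt_and_minDiff_nonpos_of_tendsto (hu : Continuous u) (hv : Continuous v)
    (hα : 0 < α) (hc : 0 < c) (hG : Continuous G)
    (hbound : ∀ l x, IsNegMin u v e l x → c ≤ G x * (l - ⟪e, x⟫_ℝ) ^ α) {L : ℕ → ℝ}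
    {X : ℕ → E} (hL : Tendsto L atTop (𝓝 l)) (hX : Tendsto X atTop (𝓝 x))
    (h : ∀ k, IsNegMin u v e (L k) (X k)) : ⟪e, x⟫_ℝ < l ∧ minDiff u v e l x ≤ 0 := by
  have hLX := hL.prodMk_nhds hX
  have hgap : Continuous fun p : ℝ × E => p.1 - ⟪e, p.2⟫_ℝ := by fun_prop
  have hgap₀ : 0 ≤ l - ⟪e, x⟫_ℝ := ge_of_tendsto' ((hgap.tendsto (l, x)).comp hLX)
    fun k => sub_nonneg.2 (h k).inner_lt.le
  have hcx : c ≤ G x * (l - ⟪e, x⟫_ℝ) ^ α :=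
    ge_of_tendsto' ((((hG.comp continuous_snd).mul
      (hgap.rpow_const fun _ => .inr hα.le)).tendsto (l, x)).comp hLX)
      fun k => hbound _ _ (h k)
  have hgap_ne : l - ⟪e, x⟫_ℝ ≠ 0 := fun h₀ => by
    rw [h₀, Real.zero_rpow hα.ne', mul_zero] at hcx
    exact hcx.not_gt hc
  exact ⟨sub_pos.1 (hgap₀.lt_of_ne' hgap_ne), le_of_tendsto'
    (((continuous_minDiff_uncurry hu hv e).tendsto (l, x)).comp hLX) fun k => (h k).neg.le⟩

lemma exists_contact_point [ProperSpace E] (he : ‖e‖ = 1) (hu : IsPosC0 u) (hv : IsPosC0 v)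
    (hα : 0 < α) (hc : 0 < c) (hGcont : Continuous G) (hG : ∀ x, 0 ≤ G x)
    (hG₀ : Tendsto (fun x => G x * ‖x‖ ^ α) (cocompact E) (𝓝 0))
    (hbound : ∀ l x, IsNegMin u v e l x → c ≤ G x * (l - ⟪e, x⟫_ℝ) ^ α) :
    ∃ l z, (∀ y, ⟪e, y⟫_ℝ ≤ l → 0 ≤ minDiff u v e l y) ∧ ⟪e, z⟫_ℝ < l ∧
      minDiff u v e l z = 0 := by
  obtain ⟨R, hR⟩ := exists_norm_le_of_isNegMin he hα.le hc hG hG₀ hbound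
  have hne := nonempty_planePositions he hu hv hR
  have hbdd : BddAbove (planePositions u v e) := bddAbove_planePositions he hu
  have hmem := (isClosed_planePositions hu.continuous hv.continuous e).csSup_mem hne hbdd
  set l := sSup (planePositions u v e)
  have hnonneg : ∀ y, ⟪e, y⟫_ℝ ≤ l → 0 ≤ minDiff u v e l y := fun y hy =>
    hy.eq_or_lt.elim (fun h => (minDiff_of_inner_eq he h).ge) (hmem y)
  obtain ⟨L, hLanti, hLgt, hLlim⟩ := exists_seq_strictAnti_tendsto l
  choose x hx using fun k => exists_isNegMin_of_notMem_planePositions he hu hv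
    fun hk => (hLgt k).not_ge (le_csSup hbdd hk)
  have hxbdd : ∀ k, x k ∈ Metric.closedBall (0 : E) (max R (max |l| |L 0|)) := fun k =>
    mem_closedBall_zero_iff.2 ((hR _ _ (hx k)).trans (max_le_max_left R
      (abs_le_max_abs_abs (hLgt k).le (hLanti.antitone (Nat.zero_le k)))))
  obtain ⟨z, -, k, hk, hz⟩ := (isCompact_closedBall _ _).tendsto_subseq hxbdd
  obtain ⟨hzl, hzle⟩ := inner_lt_and_minDiff_nonpos_of_tendsto hu.continuous hv.continuous hα hc
    hGcont hbound (hLlim.comp hk.tendsto_atTop) hz fun j => hx (k j)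
  exact ⟨l, z, hnonneg, hzl, hzle.antisymm (hnonneg z hzl.le)⟩

end MovingThePlane

section PowerNonlinearity

variable {q b t A B : ℝ}

lemma mul_rpow_sub_one_mul_sub_le (hq : 1 ≤ q) (hA : 0 < A) (hB : 0 < B) :
    q * B ^ (q - 1) * (A - B) ≤ A ^ q - B ^ q := by
  have hbern := one_add_mul_self_le_rpow_one_add (s := A / B - 1)
    (by linarith [div_pos hA hB]) hq
  rw [add_sub_cancel, Real.div_rpow hA.le hB.le, le_div_iff₀ (by positivity)] at hbern
  have hpow : B ^ q = B ^ (q - 1) * B := by rw [← Real.rpow_add_one hB.ne', sub_add_cancel]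
  have hexp : (1 + q * (A / B - 1)) * B ^ q = B ^ q + q * B ^ (q - 1) * (A - B) := by
    rw [hpow]
    field_simp
  linarith

variable {E : Type*} [NormedAddCommGroup E] [ProperSpace E] {u : E → ℝ}

lemma tendsto_norm_rpow_neg_cocompact (hb : 0 < b) :
    Tendsto (fun x : E => ‖x‖ ^ (-b)) (cocompact E) (𝓝 0) :=
  (tendsto_rpow_neg_atTop hb).comp tendsto_norm_cocompact_atTop

lemma eventually_cocompact_lt_norm (R : ℝ) : ∀ᶠ x in cocompact E, R < ‖x‖ :=
  tendsto_norm_cocompact_atTop.eventually_gt_atTop R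

lemma isLittleO_norm_rpow_neg_of_le {R : ℝ} (hu : ∀ x, 0 < u x)
    (hle : ∀ x, R < ‖x‖ → u x ≤ ‖x‖ ^ (-t)) (hbt : b < t) :
    u =o[cocompact E] fun x => ‖x‖ ^ (-b) := by
  have hO : u =O[cocompact E] fun x => ‖x‖ ^ (-t) := by
    refine IsBigO.of_bound 1 ?_
    filter_upwards [eventually_cocompact_lt_norm R] with x hx
    rw [one_mul, Real.norm_of_nonneg (hu x).le, Real.norm_of_nonneg (by positivity)]
    exact hle x hx
  have ho := (isBigO_refl (fun x : E => ‖x‖ ^ (-b)) (cocompact E)).mul_isLittleO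
    ((isLittleO_one_iff ℝ).2 (tendsto_norm_rpow_neg_cocompact (sub_pos.2 hbt)))
  refine hO.trans_isLittleO (ho.congr' ?_ (.of_forall fun x => mul_one _))
  filter_upwards [eventually_cocompact_lt_norm 0] with x hx
  rw [← Real.rpow_add hx]
  ring_nf

lemma tendsto_rpow_mul_norm_rpow {α : ℝ} (hq : 1 < q)
    (hdecay : u =o[cocompact E] fun x => ‖x‖ ^ (-(α / (q - 1)))) :
    Tendsto (fun x => u x ^ (q - 1) * ‖x‖ ^ α) (cocompact E) (𝓝 0) := by
  have hpow := (hdecay.rpow (sub_pos.2 hq)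
    (.of_forall fun x => Real.rpow_nonneg (norm_nonneg x) _)).tendsto_div_nhds_zero
  refine hpow.congr' ?_
  filter_upwards [eventually_cocompact_lt_norm 0] with x hx
  rw [← Real.rpow_mul hx.le, neg_mul, div_mul_cancel₀ _ (sub_pos.2 hq).ne', Real.rpow_neg hx.le,
    div_inv_eq_mul]

end PowerNonlinearity

section AbsorptionSystem

variable {n : ℕ} {α C q r M : ℝ} {φ ψ : ℝ → ℝ} {e x z : EuclideanSpace ℝ (Fin n)} {l : ℝ}
  {u v F : EuclideanSpace ℝ (Fin n) → ℝ}

lemma finrank_euclideanSpace_lt_add (n : ℕ) (hα : 0 < α) :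
    (Module.finrank ℝ (EuclideanSpace ℝ (Fin n)) : ℝ) < n + α := by
  rw [finrank_euclideanSpace_fin]
  linarith

lemma tendsto_truncatedIntegral_reflDiff (hα : 0 < α) (hu : Continuous u) (hM : ∀ y, |u y| ≤ M)
    (hF : IsFracLap n α C u F) (e : EuclideanSpace ℝ (Fin n)) (l : ℝ)
    (x : EuclideanSpace ℝ (Fin n)) :
    Tendsto (fun ε => C * truncatedIntegral (n + α) (reflDiff e l u) x ε) (𝓝[>] 0)
      (𝓝 (reflDiff e l F x)) := by
  refine ((hF (planeReflection e l x)).sub (hF x)).congr' ?_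
  filter_upwards [self_mem_nhdsWithin] with ε hε
  have hsub := truncatedIntegral_sub (finrank_euclideanSpace_lt_add n hα)
    (hu.comp (continuous_planeReflection e l)).aestronglyMeasurable (fun y => hM _)
    hu.aestronglyMeasurable hM x hε
  rw [← truncatedIntegral_planeReflection] at hsub
  rw [← mul_sub]
  exact congrArg (C * ·) hsub.symm

/-- A positive solution of `(−Δ)^{α/2} u = v ^ q - φ(u)`, `(−Δ)^{α/2} v = u ^ r - ψ(v)` with
nondecreasing absorption terms, decaying faster than the critical rates at which
`v ^ (q - 1)` and `u ^ (r - 1)` are comparable to `|x| ^ (-α)`. -/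
structure AbsorptionSystem (n : ℕ) (α C q r : ℝ) (φ ψ : ℝ → ℝ)
    (u v : EuclideanSpace ℝ (Fin n) → ℝ) : Prop where
  order_pos : 0 < α
  const_pos : 0 < C
  one_lt_left : 1 < q
  one_lt_right : 1 < r
  monotone_left : MonotoneOn φ (Ioi 0)
  monotone_right : MonotoneOn ψ (Ioi 0)
  continuous_left : Continuous u
  continuous_right : Continuous v
  pos_left : ∀ x, 0 < u x
  pos_right : ∀ x, 0 < v x
  eq_left : IsFracLap n α C u fun x => v x ^ q - φ (u x)
  eq_right : IsFracLap n α C v fun x => u x ^ r - ψ (v x)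
  decay_left : u =o[cocompact _] fun x => ‖x‖ ^ (-(α / (r - 1)))
  decay_right : v =o[cocompact _] fun x => ‖x‖ ^ (-(α / (q - 1)))

namespace AbsorptionSystem

lemma symm (h : AbsorptionSystem n α C q r φ ψ u v) : AbsorptionSystem n α C r q ψ φ v u :=
  ⟨h.order_pos, h.const_pos, h.one_lt_right, h.one_lt_left, h.monotone_right, h.monotone_left,
    h.continuous_right, h.continuous_left, h.pos_right, h.pos_left, h.eq_right, h.eq_left,
    h.decay_right, h.decay_left⟩

lemma isPosC0_left (h : AbsorptionSystem n α C q r φ ψ u v) : IsPosC0 u :=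
  ⟨h.continuous_left, h.pos_left, h.decay_left.isBigO.trans_tendsto
    (tendsto_norm_rpow_neg_cocompact (div_pos h.order_pos (sub_pos.2 h.one_lt_right)))⟩

lemma isPosC0_right (h : AbsorptionSystem n α C q r φ ψ u v) : IsPosC0 v :=
  h.symm.isPosC0_left

lemma tendsto_reflDiff_left (h : AbsorptionSystem n α C q r φ ψ u v)
    (e : EuclideanSpace ℝ (Fin n)) (l : ℝ) (x : EuclideanSpace ℝ (Fin n)) :
    Tendsto (fun ε => C * truncatedIntegral (n + α) (reflDiff e l u) x ε) (𝓝[>] 0)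
      (𝓝 (reflDiff e l (fun y => v y ^ q - φ (u y)) x)) :=
  have ⟨_, hM⟩ := h.isPosC0_left.bounded
  tendsto_truncatedIntegral_reflDiff h.order_pos h.continuous_left hM h.eq_left e l x

lemma le_reflDiff_source_left (h : AbsorptionSystem n α C q r φ ψ u v)
    (hneg : reflDiff e l u x ≤ 0) (huv : reflDiff e l u x ≤ reflDiff e l v x) :
    q * v x ^ (q - 1) * reflDiff e l u x ≤ reflDiff e l (fun y => v y ^ q - φ (u y)) x := by
  have hpow : q * v x ^ (q - 1) * reflDiff e l v x ≤ reflDiff e l (fun y => v y ^ q) x :=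
    mul_rpow_sub_one_mul_sub_le h.one_lt_left.le (h.pos_right _) (h.pos_right x)
  have hle : q * v x ^ (q - 1) * reflDiff e l u x ≤ q * v x ^ (q - 1) * reflDiff e l v x :=
    mul_le_mul_of_nonneg_left huv
      (mul_nonneg (by linarith [h.one_lt_left]) (Real.rpow_nonneg (h.pos_right x).le _))
  have hφ : φ (u (planeReflection e l x)) ≤ φ (u x) :=
    h.monotone_left (h.pos_left _) (h.pos_left x) (sub_nonpos.1 hneg)
  simp only [reflDiff] at hpow hle ⊢
  linarith

/-- The constant `c` in the estimate `c ≤ (q v ^ (q - 1) + r u ^ (r - 1)) d ^ α` for a negative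
minimum at distance `d` from the plane. -/
noncomputable def negMinConst (n : ℕ) (α C : ℝ) : ℝ :=
  2 * C * volume.real (Metric.ball (0 : EuclideanSpace ℝ (Fin n)) 1) /
    (2 ^ n * 4 ^ ((n : ℝ) + α))

lemma negMinConst_pos (hC : 0 < C) : 0 < negMinConst n α C := by
  have hvol : 0 < volume.real (Metric.ball (0 : EuclideanSpace ℝ (Fin n)) 1) :=
    ENNReal.toReal_pos (Metric.measure_ball_pos _ _ one_pos).ne' measure_ball_lt_top.ne
  unfold negMinConst
  positivity

lemma negMinConst_le_of_reflDiff_le (h : AbsorptionSystem n α C q r φ ψ u v) (he : ‖e‖ = 1)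
    (hx : IsNegMin u v e l x) (huv : reflDiff e l u x ≤ reflDiff e l v x) :
    negMinConst n α C ≤ q * v x ^ (q - 1) * (l - ⟪e, x⟫_ℝ) ^ α := by
  obtain ⟨M, hM⟩ := h.isPosC0_left.bounded
  have hmin : minDiff u v e l x = reflDiff e l u x := min_eq_left huv
  have hneg : reflDiff e l u x < 0 := hmin ▸ hx.neg
  have hnonpos := isNonposMin_reflDiff he h.continuous_left hM hx.inner_lt hneg.le
    fun y hy => hmin ▸ (hx.le y hy).trans (min_le_left _ _)
  have hmax := hnonpos.rpow_mul_le (finrank_euclideanSpace_lt_add n h.order_pos) h.const_pos.le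
    (h.tendsto_reflDiff_left e l x)
  rw [finrank_euclideanSpace_fin, add_sub_cancel_left] at hmax
  have hd : 0 ≤ (l - ⟪e, x⟫_ℝ) ^ α := Real.rpow_nonneg (sub_nonneg.2 hx.inner_lt.le) α
  have hsource := mul_le_mul_of_nonneg_left (h.le_reflDiff_source_left hneg.le huv) hd
  refine (mul_le_mul_right_of_neg hneg).1 ?_
  calc q * v x ^ (q - 1) * (l - ⟪e, x⟫_ℝ) ^ α * reflDiff e l u x
    _ = (l - ⟪e, x⟫_ℝ) ^ α * (q * v x ^ (q - 1) * reflDiff e l u x) := by ring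
    _ ≤ negMinConst n α C * reflDiff e l u x := hsource.trans hmax

lemma negMinConst_le (h : AbsorptionSystem n α C q r φ ψ u v) (he : ‖e‖ = 1)
    (hx : IsNegMin u v e l x) :
    negMinConst n α C ≤
      (q * v x ^ (q - 1) + r * u x ^ (r - 1)) * (l - ⟪e, x⟫_ℝ) ^ α := by
  have hd : 0 ≤ (l - ⟪e, x⟫_ℝ) ^ α := Real.rpow_nonneg (sub_nonneg.2 hx.inner_lt.le) α
  have hq : 0 ≤ q * v x ^ (q - 1) :=
    mul_nonneg (by linarith [h.one_lt_left]) (Real.rpow_nonneg (h.pos_right x).le _)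
  have hr : 0 ≤ r * u x ^ (r - 1) :=
    mul_nonneg (by linarith [h.one_lt_right]) (Real.rpow_nonneg (h.pos_left x).le _)
  rcases le_total (reflDiff e l u x) (reflDiff e l v x) with huv | hvu
  · exact (h.negMinConst_le_of_reflDiff_le he hx huv).trans
      (mul_le_mul_of_nonneg_right (le_add_of_nonneg_right hr) hd)
  · exact (h.symm.negMinConst_le_of_reflDiff_le he hx.symm hvu).trans
      (mul_le_mul_of_nonneg_right (le_add_of_nonneg_left hq) hd)

lemma reflDiff_eq_zero_of_contact (h : AbsorptionSystem n α C q r φ ψ u v) (he : ‖e‖ = 1)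
    (hmin : ∀ y, ⟪e, y⟫_ℝ ≤ l → 0 ≤ minDiff u v e l y) (hz : ⟪e, z⟫_ℝ < l)
    (huz : reflDiff e l u z = 0) (y : EuclideanSpace ℝ (Fin n)) : reflDiff e l u y = 0 := by
  obtain ⟨M, hM⟩ := h.isPosC0_left.bounded
  have hnonpos := isNonposMin_reflDiff he h.continuous_left hM hz huz.le
    fun y hy => huz ▸ (hmin y hy).trans (min_le_left _ _)
  have hsource := h.le_reflDiff_source_left huz.le
    (huz ▸ (hmin z hz.le).trans (min_le_right _ _))
  rw [huz, mul_zero] at hsource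
  exact reflDiff_eq_zero_of_half_space he (fun y hy => hnonpos.eq_zero_of_eq_zero
    (finrank_euclideanSpace_lt_add n h.order_pos) h.const_pos (h.tendsto_reflDiff_left e l z) huz
    hsource hy) y

lemma reflDiff_right_eq_zero (h : AbsorptionSystem n α C q r φ ψ u v)
    (hu : ∀ y, reflDiff e l u y = 0) (x : EuclideanSpace ℝ (Fin n)) : reflDiff e l v x = 0 := by
  have hlim := h.tendsto_reflDiff_left e l x
  simp only [truncatedIntegral, hu, sub_self, zero_div, integral_zero, mul_zero] at hlim
  have hsource := tendsto_nhds_unique hlim tendsto_const_nhds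
  have hux : u (planeReflection e l x) = u x := sub_eq_zero.1 (hu x)
  simp only [reflDiff, hux, sub_sub_sub_cancel_right] at hsource
  exact sub_eq_zero.2 ((Real.rpow_left_inj (h.pos_right _).le (h.pos_right x).le
    (by linarith [h.one_lt_left])).1 (sub_eq_zero.1 hsource))

lemma exists_reflDiff_eq_zero (h : AbsorptionSystem n α C q r φ ψ u v) (he : ‖e‖ = 1) :
    ∃ l, (∀ y, reflDiff e l u y = 0) ∧ ∀ y, reflDiff e l v y = 0 := by
  have hG₀ : Tendsto (fun x => (q * v x ^ (q - 1) + r * u x ^ (r - 1)) * ‖x‖ ^ α)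
      (cocompact _) (𝓝 0) := by
    have hlim := ((tendsto_rpow_mul_norm_rpow h.one_lt_left h.decay_right).const_mul q).add
      ((tendsto_rpow_mul_norm_rpow h.one_lt_right h.decay_left).const_mul r)
    simpa only [mul_zero, add_zero, ← mul_assoc, ← add_mul] using hlim
  have hGcont : Continuous fun x => q * v x ^ (q - 1) + r * u x ^ (r - 1) :=
    ((h.continuous_right.rpow_const fun x => .inl (h.pos_right x).ne').const_mul q).add
      ((h.continuous_left.rpow_const fun x => .inl (h.pos_left x).ne').const_mul r)
  have hG : ∀ x, 0 ≤ q * v x ^ (q - 1) + r * u x ^ (r - 1) := fun x => by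
    have hv := h.pos_right x
    have hu := h.pos_left x
    have hq := h.one_lt_left
    have hr := h.one_lt_right
    positivity
  obtain ⟨l, z, hmin, hz, hcontact⟩ := exists_contact_point he h.isPosC0_left h.isPosC0_right
    h.order_pos (negMinConst_pos h.const_pos) hGcont hG hG₀ fun l x hx => h.negMinConst_le he hx
  refine ⟨l, ?_⟩
  rcases min_choice (reflDiff e l u z) (reflDiff e l v z) with huz | hvz
  · have hu := h.reflDiff_eq_zero_of_contact he hmin hz (huz.symm.trans hcontact)
    exact ⟨hu, h.reflDiff_right_eq_zero hu⟩
  · have hv := h.symm.reflDiff_eq_zero_of_contact he (minDiff_comm u v e l ▸ hmin) hz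
      (hvz.symm.trans hcontact)
    exact ⟨h.symm.reflDiff_right_eq_zero hv, hv⟩

end AbsorptionSystem

end AbsorptionSystem

section Center

variable {E : Type*} [NormedAddCommGroup E] [InnerProductSpace ℝ E] [FiniteDimensional ℝ E]
  [MeasurableSpace E] [BorelSpace E] {e : E} {l : ℝ} {S : Set E} {w : E → ℝ}

lemma inner_setAverage_of_preimage_planeReflection (hpos : volume S ≠ 0)
    (hbdd : Bornology.IsBounded S) (he : ‖e‖ = 1) (hS : planeReflection e l ⁻¹' S = S) :
    ⟪e, ⨍ y in S, y⟫_ℝ = l := by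
  have hfin : volume S ≠ ⊤ := hbdd.measure_lt_top.ne
  have hid : IntegrableOn (fun y : E => y) S :=
    (continuous_id.continuousOn.integrableOn_compact hbdd.isCompact_closure).mono_set
      subset_closure
  have hswap := (measurePreserving_planeReflection e l).setIntegral_preimage_emb
    (measurableEmbedding_planeReflection e l) (fun y => ⟪e, y⟫_ℝ) S
  have hconst : IntegrableOn (fun _ : E => 2 * l) S := integrableOn_const hfin
  simp only [hS, inner_planeReflection he] at hswap
  rw [integral_sub hconst (hid.const_inner e), setIntegral_const, integral_inner hid,
    smul_eq_mul] at hswap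
  have hvol : volume.real S ≠ 0 := (ENNReal.toReal_pos hpos hfin).ne'
  rw [setAverage_eq, inner_smul_right, inv_mul_eq_iff_eq_mul₀ hvol]
  linarith

lemma IsPosC0.exists_forall_inner_eq (hw : IsPosC0 w) :
    ∃ x₀ : E, ∀ e l, ‖e‖ = 1 → (∀ y, reflDiff e l w y = 0) → ⟪e, x₀⟫_ℝ = l := by
  have hhalf : w 0 / 2 < w 0 := half_lt_self (hw.pos 0)
  have hopen : IsOpen {y | w 0 / 2 < w y} := isOpen_lt continuous_const hw.continuous
  have hbdd : Bornology.IsBounded {y | w 0 / 2 < w y} := by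
    have hsmall : ∀ᶠ y in cocompact E, w y ≤ w 0 / 2 :=
      hw.tendsto_zero.eventually_le_const (half_pos (hw.pos 0))
    rw [← Metric.cobounded_eq_cocompact] at hsmall
    exact Bornology.isBounded_def.2 (hsmall.mono fun y hy => hy.not_gt)
  refine ⟨⨍ y in {y | w 0 / 2 < w y}, y, fun e l he hsymm =>
    inner_setAverage_of_preimage_planeReflection
      (hopen.measure_pos volume ⟨0, hhalf⟩).ne' hbdd he ?_⟩
  ext y
  rw [mem_preimage, mem_ofPred_eq, mem_ofPred_eq, sub_eq_zero.1 (hsymm y)]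

end Center

section CriticalExponent

variable {n : ℕ} {α C p s κ κ₁ κ₂ : ℝ} {u v : EuclideanSpace ℝ (Fin n) → ℝ}

lemma monotoneOn_const_mul_rpow (hκ : 0 ≤ κ) (hp : 0 ≤ p) :
    MonotoneOn (fun t : ℝ => κ * t ^ p) (Ioi 0) :=
  fun _ ht _ _ hle =>
    mul_le_mul_of_nonneg_left (Real.rpow_le_rpow (le_of_lt ht) hle hp) hκ

lemma div_critical_sub_one_lt (hα : 0 < α) (hnα : α < n) :
    α / ((n + α) / (n - α) - 1) < n - α := by
  have hd : 0 < n - α := sub_pos.2 hnα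
  have hhalf : α / ((n + α) / (n - α) - 1) = (n - α) / 2 := by
    rw [div_sub_one hd.ne', add_sub_sub_cancel]
    field_simp
    ring
  linarith

lemma absorptionSystem_of_critical (hα : 0 < α) (hnα : α < n) (hC : 0 < C) (hp : 0 ≤ p)
    (hs : 0 ≤ s) (hκ₁ : 0 ≤ κ₁) (hκ₂ : 0 ≤ κ₂) (hu : Continuous u) (hv : Continuous v)
    (hupos : ∀ x, 0 < u x) (hvpos : ∀ x, 0 < v x)
    (hequ : IsFracLap n α C u fun x => v x ^ ((n + α) / (n - α)) - κ₁ * u x ^ p)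
    (heqv : IsFracLap n α C v fun x => u x ^ ((n + α) / (n - α)) - κ₂ * v x ^ s)
    (hdecu : ∃ R : ℝ, ∀ x, R < ‖x‖ → u x ≤ ‖x‖ ^ (-(n - α)))
    (hdecv : ∃ R : ℝ, ∀ x, R < ‖x‖ → v x ≤ ‖x‖ ^ (-(n - α))) :
    AbsorptionSystem n α C ((n + α) / (n - α)) ((n + α) / (n - α)) (fun t => κ₁ * t ^ p)
      (fun t => κ₂ * t ^ s) u v where
  order_pos := hα
  const_pos := hC
  one_lt_left := (one_lt_div (sub_pos.2 hnα)).2 (by linarith)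
  one_lt_right := (one_lt_div (sub_pos.2 hnα)).2 (by linarith)
  monotone_left := monotoneOn_const_mul_rpow hκ₁ hp
  monotone_right := monotoneOn_const_mul_rpow hκ₂ hs
  continuous_left := hu
  continuous_right := hv
  pos_left := hupos
  pos_right := hvpos
  eq_left := hequ
  eq_right := heqv
  decay_left :=
    have ⟨_, hle⟩ := hdecu
    isLittleO_norm_rpow_neg_of_le hupos hle (div_critical_sub_one_lt hα hnα)
  decay_right :=
    have ⟨_, hle⟩ := hdecv
    isLittleO_norm_rpow_neg_of_le hvpos hle (div_critical_sub_one_lt hα hnα)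

end CriticalExponent

end MovingPlanes

theorem radial_symmetry_critical_absorption_general {n : ℕ} {α C q r : ℝ} {φ ψ : ℝ → ℝ}
    {u v : EuclideanSpace ℝ (Fin n) → ℝ} (h : MovingPlanes.AbsorptionSystem n α C q r φ ψ u v) :
    ∃ x₀ : EuclideanSpace ℝ (Fin n), ∀ x y : EuclideanSpace ℝ (Fin n),
      ‖x - x₀‖ = ‖y - x₀‖ → u x = u y ∧ v x = v y := by
  obtain ⟨x₀, hx₀⟩ := h.isPosC0_left.exists_forall_inner_eq
  refine ⟨x₀, fun x y hxy => ?_⟩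
  rcases eq_or_ne x y with rfl | hne
  · exact ⟨rfl, rfl⟩
  have he : ‖‖x - y‖⁻¹ • (x - y)‖ = 1 := norm_smul_inv_norm (𝕜 := ℝ) (sub_ne_zero.2 hne)
  have hrefl := MovingPlanes.planeReflection_inner_of_norm_sub_eq hne hxy
  obtain ⟨l, hu, hv⟩ := h.exists_reflDiff_eq_zero he
  rw [hx₀ _ l he hu] at hrefl
  have hux := sub_eq_zero.1 (hu x)
  have hvx := sub_eq_zero.1 (hv x)
  rw [hrefl] at hux hvx
  exact ⟨hux.symm, hvx.symm⟩

/-- Radial symmetry for the critical system with absorption (Corollary 1.2):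
`(−Δ)^{α/2}u = v^{(n+α)/(n−α)} − κ₁ u^p`, `(−Δ)^{α/2}v = u^{(n+α)/(n−α)} − κ₂ v^s`. -/
theorem radial_symmetry_critical_absorption {n : ℕ} [NeZero n] (α C p s κ₁ κ₂ : ℝ)
    (hα : α ∈ Ioo (0 : ℝ) 2) (hnα : α < (n : ℝ)) (hC : 0 < C)
    (hp : 1 < p) (hs : 1 < s) (hκ₁ : 0 < κ₁) (hκ₂ : 0 < κ₂)
    (u v : EuclideanSpace ℝ (Fin n) → ℝ)
    (hupos : ∀ x, 0 < u x) (hvpos : ∀ x, 0 < v x)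
    (huL : MemLalpha n α u) (hvL : MemLalpha n α v)
    (huC : C11loc u) (hvC : C11loc v)
    (hequ : IsFracLap n α C u
      (fun x => v x ^ (((n : ℝ) + α) / ((n : ℝ) - α)) - κ₁ * u x ^ p))
    (heqv : IsFracLap n α C v
      (fun x => u x ^ (((n : ℝ) + α) / ((n : ℝ) - α)) - κ₂ * v x ^ s))
    (hdecu : ∃ R : ℝ, ∀ x, R < ‖x‖ → u x ≤ ‖x‖ ^ (-((n : ℝ) - α)))
    (hdecv : ∃ R : ℝ, ∀ x, R < ‖x‖ → v x ≤ ‖x‖ ^ (-((n : ℝ) - α))) :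
    ∃ x₀ : EuclideanSpace ℝ (Fin n), ∀ x y : EuclideanSpace ℝ (Fin n),
      ‖x - x₀‖ = ‖y - x₀‖ → u x = u y ∧ v x = v y :=
  radial_symmetry_critical_absorption_general <|
    MovingPlanes.absorptionSystem_of_critical hα.1 hnα hC (by linarith) (by linarith) hκ₁.le hκ₂.le
      huC.1.continuous hvC.1.continuous hupos hvpos hequ heqv hdecu hdecv
end

section
/- Radial symmetry for the fractional Hénon system: Let α ∈ (0,2), n > α, q, r > (n+α)/(n−α), σ₁ = (n−α)q − (n+α), σ₂ = (n−α)r − (n+α), and let (u,v) ∈ (L_α ∩ C^{1,1}_{loc}(ℝ^n))² be a positive solution of (−Δ)^{α/2}u = |x|^{σ₁}v^q, (−Δ)^{α/2}v = |x|^{σ₂}u^r on ℝ^n. If |x|^{n−α}u(x) → +∞ and |x|^{n−α}v(x) → +∞ as |x| → ∞, then u and v are radially symmetric about the origin. -/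
open Set MeasureTheory Filter

/-!
The method of moving spheres. Whatever its centre `c ≠ 0`, the Kelvin transform in the sphere
through the origin centred at `c` preserves the system, because `|x|` is multiplied by
`|c| / |x - c|` under the inversion and the weights `|x|^σ` are exactly the ones absorbing this
factor. By the growth hypothesis the transforms blow up at the pole `c`, so a failure of
`u ≤ u_c` inside the sphere is attained at an interior minimum of `u_c - u`. There the equations
bound each of the negative minima of `u_c - u` and `v_c - v` by a multiple of the other, with
constants that tend to zero at the sphere; hence negativity cannot be confined to a thin shell. So
the centres for which both inequalities hold contain all small `c`, and by the strong maximum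
principle they form an open and relatively closed subset of every ray from the origin. As
`c = t z` with `t → ∞`, the spheres tend to the hyperplane orthogonal to `z` through the origin,
so `u` increases under the reflection taking `x` to `y` whenever `|x| = |y|` and `z = x - y`.
-/

section MovingSpheres

open EuclideanGeometry Metric Module Topology

/-! ### Inversions -/

section Inversion

variable {E : Type*} [NormedAddCommGroup E] [InnerProductSpace ℝ E]

lemma norm_inversion_norm {c x : E} (hc : c ≠ 0) (hx : x ≠ c) :
    ‖inversion c ‖c‖ x‖ = ‖c‖ / dist x c * ‖x‖ := by
  have hzero : inversion c ‖c‖ (0 : E) = 0 := by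
    simpa using inversion_dist_center c (0 : E)
  have hdist := dist_inversion_inversion hx hc.symm ‖c‖
  rw [hzero, dist_zero_right, dist_zero_right, dist_zero_left] at hdist
  have := norm_pos_iff.2 hc
  rw [hdist]
  field_simp

lemma image_inversion_preimage_diff_center (c : E) {ρ : ℝ} (hρ : ρ ≠ 0) (A : Set E) :
    inversion c ρ '' ((inversion c ρ ⁻¹' A) \ {c}) = A \ {c} := by
  rw [image_sdiff (inversion_injective c hρ), image_singleton, inversion_self,
    image_preimage_eq A (inversion_surjective c hρ)]

lemma preimage_inversion_compl_closedBall (c : E) {ρ : ℝ} (hρ : 0 < ρ) :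
    inversion c ρ ⁻¹' (closedBall c ρ)ᶜ = ball c ρ \ {c} := by
  ext y
  rcases eq_or_ne y c with rfl | hy
  · simp [hρ.le]
  have hyc := dist_pos.2 hy
  simp only [mem_preimage, mem_compl_iff, mem_closedBall, not_le, Set.mem_sdiff, mem_ball,
    mem_singleton_iff, hy, not_false_eq_true, and_true, dist_inversion_center, lt_div_iff₀ hyc]
  rw [sq, mul_lt_mul_iff_right₀ hρ]

lemma sq_dist_inversion_sub_sq_dist {c y : E} {ρ : ℝ} (hρ : 0 < ρ) (hy : y ≠ c) (x : E) :
    (dist y c / ρ * dist x (inversion c ρ y)) ^ 2 - dist x y ^ 2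
      = (ρ ^ 2 - dist x c ^ 2) * (ρ ^ 2 - dist y c ^ 2) / ρ ^ 2 := by
  obtain ⟨X, rfl⟩ : ∃ X, x = X + c := ⟨x - c, by abel⟩
  obtain ⟨Y, rfl⟩ : ∃ Y, y = Y + c := ⟨y - c, by abel⟩
  have hY : 0 < ‖Y‖ := norm_pos_iff.2 fun h => hy (by simp [h])
  have hinv : dist (X + c) (inversion c ρ (Y + c)) = ‖X - (ρ / ‖Y‖) ^ 2 • Y‖ := by
    rw [dist_eq_norm, inversion]
    congr 1
    simp [dist_eq_norm]
  rw [hinv, dist_add_right, dist_eq_norm X Y, dist_add_self_left, dist_add_self_left, mul_pow,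
    norm_sub_sq_real, norm_sub_sq_real, inner_smul_right, norm_smul,
    Real.norm_of_nonneg (by positivity)]
  field_simp
  ring

lemma dist_lt_dist_inversion {c x y : E} {ρ : ℝ} (hx : x ∈ ball c ρ) (hy : y ∈ ball c ρ \ {c}) :
    dist x y < dist y c / ρ * dist x (inversion c ρ y) := by
  have hρ : 0 < ρ := dist_nonneg.trans_lt hx
  have hidentity := sq_dist_inversion_sub_sq_dist hρ hy.2 x
  have hxc : 0 < ρ ^ 2 - dist x c ^ 2 := sub_pos.2 (pow_lt_pow_left₀ hx dist_nonneg two_ne_zero)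
  have hyc : 0 < ρ ^ 2 - dist y c ^ 2 := sub_pos.2 (pow_lt_pow_left₀ hy.1 dist_nonneg two_ne_zero)
  refine lt_of_pow_lt_pow_left₀ 2 (by positivity) (sub_pos.1 ?_)
  rw [hidentity]
  positivity

lemma tendsto_inv_smul_sub_atTop (x z : E) :
    Tendsto (fun t : ℝ => t⁻¹ • x - z) atTop (𝓝 (-z)) := by
  simpa using ((tendsto_inv_atTop_zero (𝕜 := ℝ)).smul_const x).sub_const z

lemma norm_div_dist_smul {t : ℝ} (ht : 0 < t) (x z : E) :
    ‖t • z‖ / dist x (t • z) = ‖z‖ / ‖t⁻¹ • x - z‖ := by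
  have hdist : dist x (t • z) = t * ‖t⁻¹ • x - z‖ := by
    rw [← norm_smul_of_nonneg ht.le, smul_sub, smul_inv_smul₀ ht.ne', dist_eq_norm]
  rw [hdist, norm_smul_of_nonneg ht.le, mul_div_mul_left _ _ ht.ne']

lemma tendsto_norm_div_dist_smul_atTop {z : E} (hz : z ≠ 0) (x : E) :
    Tendsto (fun t : ℝ => ‖t • z‖ / dist x (t • z)) atTop (𝓝 1) := by
  have hlim := (tendsto_const_nhds (x := ‖z‖)).div (tendsto_inv_smul_sub_atTop x z).norm
    (by simpa using hz)
  rw [norm_neg, div_self (norm_ne_zero_iff.2 hz)] at hlim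
  refine hlim.congr' ?_
  filter_upwards [eventually_gt_atTop 0] with t ht
  exact (norm_div_dist_smul ht x z).symm

lemma one_sub_sq_norm_div_mul {t : ℝ} (ht : t ≠ 0) {x z : E} (hne : t⁻¹ • x - z ≠ 0) :
    (1 - (‖z‖ / ‖t⁻¹ • x - z‖) ^ 2) * t
      = (t⁻¹ * ‖x‖ ^ 2 - 2 * inner ℝ x z) / ‖t⁻¹ • x - z‖ ^ 2 := by
  have hexp : ‖t⁻¹ • x - z‖ ^ 2 = t⁻¹ ^ 2 * ‖x‖ ^ 2 - 2 * (t⁻¹ * inner ℝ x z) + ‖z‖ ^ 2 := by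
    rw [norm_sub_sq_real, real_inner_smul_left, norm_smul, mul_pow, Real.norm_eq_abs, sq_abs]
  have hpow : ‖t⁻¹ • x - z‖ ^ 2 ≠ 0 := pow_ne_zero 2 (norm_ne_zero_iff.2 hne)
  rw [div_pow, eq_div_iff hpow, mul_right_comm, sub_mul, one_mul, div_mul_cancel₀ _ hpow, hexp]
  field_simp
  ring

lemma tendsto_inversion_smul_atTop {z : E} (hz : z ≠ 0) (x : E) :
    Tendsto (fun t : ℝ => inversion (t • z) ‖t • z‖ x) atTop (𝓝 ((ℝ ∙ z)ᗮ.reflection x)) := by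
  have hsub := tendsto_inv_smul_sub_atTop x z
  have hcoef : Tendsto (fun t : ℝ =>
      (t⁻¹ * ‖x‖ ^ 2 - 2 * inner ℝ x z) / ‖t⁻¹ • x - z‖ ^ 2) atTop
      (𝓝 ((0 * ‖x‖ ^ 2 - 2 * inner ℝ x z) / ‖-z‖ ^ 2)) :=
    ((tendsto_inv_atTop_zero.mul_const _).sub_const _).div (hsub.norm.pow 2)
      (by simpa using hz)
  have hlim := (((tendsto_norm_div_dist_smul_atTop hz x).pow 2).smul_const x).add
    (hcoef.smul_const z)
  have hvalue : (1 : ℝ) ^ 2 • x + ((0 * ‖x‖ ^ 2 - 2 * inner ℝ x z) / ‖-z‖ ^ 2) • z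
      = (ℝ ∙ z)ᗮ.reflection x := by
    rw [Submodule.reflection_orthogonal_apply, Submodule.reflection_singleton_apply,
      real_inner_comm, norm_neg]
    simp only [RCLike.ofReal_real_eq_id, id_eq]
    module
  rw [hvalue] at hlim
  refine hlim.congr' ?_
  filter_upwards [eventually_gt_atTop 0, hsub.eventually_ne (neg_ne_zero.2 hz)]
    with t ht hne
  rw [← one_sub_sq_norm_div_mul ht.ne' hne, inversion, norm_div_dist_smul ht]
  simp only [vsub_eq_sub, vadd_eq_add]
  module

end Inversion

section ChangeOfVariables

variable {E : Type*} [NormedAddCommGroup E] [InnerProductSpace ℝ E] [FiniteDimensional ℝ E]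

lemma abs_det_smul_reflection (t : ℝ) (K : Submodule ℝ E) :
    |(t ^ 2 • (K.reflection : E →L[ℝ] E)).det| = t ^ (2 * finrank ℝ E) := by
  have hdet : (t ^ 2 • (K.reflection : E →L[ℝ] E)).det
      = (t ^ 2) ^ finrank ℝ E * LinearMap.det K.reflection.toLinearMap := by
    rw [ContinuousLinearMap.det, ContinuousLinearMap.toLinearMap_smul, LinearMap.det_smul]
    rfl
  rw [hdet, Submodule.det_reflection, abs_mul, abs_pow, abs_pow, abs_pow]
  simp [pow_mul]

variable [MeasurableSpace E] [BorelSpace E]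

lemma measurable_inversion (c : E) (ρ : ℝ) : Measurable (inversion c ρ) := by
  unfold inversion
  simp only [vsub_eq_sub, vadd_eq_add]
  fun_prop

variable [Nontrivial E]

lemma diff_center_ae_eq (c : E) (A : Set E) : (A \ {c} : Set E) =ᵐ[volume] A :=
  sdiff_null_ae_eq_self (measure_singleton c)

lemma setIntegral_eq_setIntegral_inversion (c : E) {ρ : ℝ} (hρ : ρ ≠ 0) {A : Set E}
    (hA : MeasurableSet A) (f : E → ℝ) :
    ∫ z in A, f z = ∫ y in inversion c ρ ⁻¹' A,
      (ρ / dist y c) ^ (2 * finrank ℝ E) * f (inversion c ρ y) := by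
  rw [← setIntegral_congr_set (diff_center_ae_eq c A),
    ← image_inversion_preimage_diff_center c hρ A,
    integral_image_eq_integral_abs_det_fderiv_smul volume
      ((measurable_inversion c ρ hA).diff (measurableSet_singleton c))
      (fun y hy => (hasFDerivAt_inversion (R := ρ) hy.2).hasFDerivWithinAt)
      (inversion_injective c hρ).injOn, setIntegral_congr_set (diff_center_ae_eq c _)]
  simp only [abs_det_smul_reflection, smul_eq_mul]

lemma integrableOn_iff_integrableOn_inversion (c : E) {ρ : ℝ} (hρ : ρ ≠ 0) {A : Set E}
    (hA : MeasurableSet A) (f : E → ℝ) :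
    IntegrableOn f A ↔ IntegrableOn
      (fun y => (ρ / dist y c) ^ (2 * finrank ℝ E) * f (inversion c ρ y))
      (inversion c ρ ⁻¹' A) := by
  rw [← integrableOn_congr_set_ae (diff_center_ae_eq c A),
    ← image_inversion_preimage_diff_center c hρ A,
    integrableOn_image_iff_integrableOn_abs_det_fderiv_smul volume
      ((measurable_inversion c ρ hA).diff (measurableSet_singleton c))
      (fun y hy => (hasFDerivAt_inversion (R := ρ) hy.2).hasFDerivWithinAt)
      (inversion_injective c hρ).injOn, integrableOn_congr_set_ae (diff_center_ae_eq c _)]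
  simp only [abs_det_smul_reflection, smul_eq_mul]

end ChangeOfVariables

/-! ### The fractional Laplacian and the Kelvin transform -/

section Kernel

variable {E : Type*} [NormedAddCommGroup E] [InnerProductSpace ℝ E]

/-- The kernel `|x − y|^{−(d+α)}` of the fractional Laplacian of order `α`, where `d = dim E`.
As `0⁻¹ = 0`, it is `0` on the diagonal whenever `d + α ≠ 0`. -/
noncomputable def fracKernel (α : ℝ) (x y : E) : ℝ := (dist x y ^ ((finrank ℝ E : ℝ) + α))⁻¹

/-- The Kelvin transform of order `α` with respect to the sphere of centre `c` and radius `ρ`.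
Its value at the pole `c` is junk. -/
noncomputable def kelvinTransform (α : ℝ) (c : E) (ρ : ℝ) (g : E → ℝ) (y : E) : ℝ :=
  (ρ / dist y c) ^ ((finrank ℝ E : ℝ) - α) * g (inversion c ρ y)

lemma fracKernel_nonneg (α : ℝ) (x y : E) : 0 ≤ fracKernel α x y := by
  unfold fracKernel
  positivity

lemma kelvinTransform_kelvinTransform (α : ℝ) (g : E → ℝ) {c y : E} {ρ : ℝ} (hρ : 0 < ρ)
    (hy : y ≠ c) : kelvinTransform α c ρ (kelvinTransform α c ρ g) y = g y := by
  have hyc := dist_pos.2 hy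
  have hone : ρ / dist y c * (ρ / (ρ ^ 2 / dist y c)) = 1 := by field_simp
  rw [kelvinTransform, kelvinTransform, inversion_inversion c hρ.ne', dist_inversion_center,
    ← mul_assoc, ← Real.mul_rpow (by positivity) (by positivity), hone, Real.one_rpow, one_mul]

lemma kelvinTransform_sub (α : ℝ) (c : E) (ρ : ℝ) (g h : E → ℝ) (y : E) :
    kelvinTransform α c ρ (fun z => g z - h z) y
      = kelvinTransform α c ρ g y - kelvinTransform α c ρ h y :=
  mul_sub _ _ _

lemma kelvinTransform_of_mem_sphere (α : ℝ) {c y : E} {ρ : ℝ} (hρ : ρ ≠ 0) (hy : y ∈ sphere c ρ)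
    (g : E → ℝ) : kelvinTransform α c ρ g y = g y := by
  rw [kelvinTransform, inversion_of_mem_sphere hy, mem_sphere.1 hy, div_self hρ, Real.one_rpow,
    one_mul]

lemma differentiableAt_kelvinTransform (α : ℝ) {g : E → ℝ} {c x : E} {ρ : ℝ} (hρ : 0 < ρ)
    (hx : x ≠ c) (hg : DifferentiableAt ℝ g (inversion c ρ x)) :
    DifferentiableAt ℝ (kelvinTransform α c ρ g) x := by
  have hdist : DifferentiableAt ℝ (fun y => ρ / dist y c) x :=
    ((differentiableAt_id.dist ℝ (differentiableAt_const c) hx).fun_inv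
      (dist_ne_zero.2 hx)).const_mul ρ
  have hpos : ρ / dist x c ≠ 0 := div_ne_zero hρ.ne' (dist_ne_zero.2 hx)
  exact (hdist.rpow_const (Or.inl hpos)).mul
    (hg.comp x (hasFDerivAt_inversion hx).differentiableAt)

lemma fracKernel_inversion (α : ℝ) {c x y : E} {ρ : ℝ} (hρ : 0 < ρ) (hx : x ≠ c) (hy : y ≠ c) :
    (ρ / dist y c) ^ (2 * finrank ℝ E) * fracKernel α (inversion c ρ x) (inversion c ρ y)
      = (dist x c / ρ) ^ ((finrank ℝ E : ℝ) + α) *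
        ((ρ / dist y c) ^ ((finrank ℝ E : ℝ) - α) * fracKernel α x y) := by
  have hxc := dist_pos.2 hx
  have hyc := dist_pos.2 hy
  have hratio : ρ ^ 2 / (dist x c * dist y c) = (dist x c / ρ)⁻¹ * (ρ / dist y c) := by
    field_simp
  have hexp : (ρ / dist y c) ^ (2 * finrank ℝ E) = (ρ / dist y c) ^ ((finrank ℝ E : ℝ) - α) *
      (ρ / dist y c) ^ ((finrank ℝ E : ℝ) + α) := by
    rw [← Real.rpow_add (by positivity), ← Real.rpow_natCast]
    congr 1
    push_cast
    ring
  have : 0 < (ρ / dist y c) ^ ((finrank ℝ E : ℝ) + α) := by positivity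
  rw [fracKernel, fracKernel, dist_inversion_inversion hx hy, hratio, hexp,
    Real.mul_rpow (by positivity) dist_nonneg, Real.mul_rpow (by positivity) (by positivity),
    Real.inv_rpow (by positivity), mul_inv, mul_inv, inv_inv]
  field_simp

lemma mem_preimage_inversion_compl_ball {c x y : E} {ρ : ℝ} (hρ : 0 < ρ) (hx : x ≠ c)
    (hy : y ≠ c) (τ : ℝ) :
    y ∈ inversion c ρ ⁻¹' (ball (inversion c ρ x) (τ * (ρ ^ 2 / dist x c ^ 2)))ᶜ
      ↔ τ * dist y c ≤ dist x y * dist x c := by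
  have hxc := dist_pos.2 hx
  have hyc := dist_pos.2 hy
  have hleft : τ * (ρ ^ 2 / dist x c ^ 2)
      = ρ ^ 2 / (dist x c ^ 2 * dist y c) * (τ * dist y c) := by field_simp
  have hright : ρ ^ 2 / (dist x c * dist y c) * dist x y
      = ρ ^ 2 / (dist x c ^ 2 * dist y c) * (dist x y * dist x c) := by field_simp
  rw [mem_preimage, mem_compl_iff, mem_ball, not_lt, dist_comm (inversion c ρ y),
    dist_inversion_inversion hx hy, hleft, hright]
  exact mul_le_mul_iff_right₀ (by positivity)

lemma mul_fracKernel_inversion (α : ℝ) {c x y : E} {ρ : ℝ} (hρ : 0 < ρ) (hx : x ≠ c)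
    (hy : y ≠ c) (g : E → ℝ) :
    (ρ / dist y c) ^ (2 * finrank ℝ E) *
        (g (inversion c ρ y) * fracKernel α (inversion c ρ x) (inversion c ρ y))
      = (dist x c / ρ) ^ ((finrank ℝ E : ℝ) + α) *
        (kelvinTransform α c ρ g y * fracKernel α x y) := by
  rw [mul_left_comm, fracKernel_inversion α hρ hx hy, kelvinTransform]
  ring

variable [MeasurableSpace E] [BorelSpace E]

/-- Integrability of `g` against the kernel of `(−Δ)^{α/2}` at `x`, away from `x`. -/
def FracIntegrableAt [FiniteDimensional ℝ E] (α : ℝ) (g : E → ℝ) (x : E) : Prop :=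
  ∀ ε > 0, IntegrableOn (fun y => g y * fracKernel α x y) (ball x ε)ᶜ

/-- `(−Δ)^{α/2} g (x) = L` in the principal-value sense, with normalizing constant `1`. -/
def HasFracLapAt [FiniteDimensional ℝ E] (α : ℝ) (g : E → ℝ) (x : E) (L : ℝ) : Prop :=
  Tendsto (fun ε => ∫ y in (ball x ε)ᶜ, (g x - g y) * fracKernel α x y) (𝓝[>] 0) (𝓝 L)

lemma measurable_fracKernel (α : ℝ) (x : E) : Measurable (fracKernel α x) := by
  unfold fracKernel
  fun_prop

variable [FiniteDimensional ℝ E] {α : ℝ} {g h : E → ℝ} {x : E}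

lemma FracIntegrableAt.sub (hg : FracIntegrableAt α g x) (hh : FracIntegrableAt α h x) :
    FracIntegrableAt α (fun y => g y - h y) x := fun ε hε => by
  simpa only [sub_mul] using (hg ε hε).fun_sub (hh ε hε)

lemma FracIntegrableAt.const_mul (hg : FracIntegrableAt α g x) (a : ℝ) :
    FracIntegrableAt α (fun y => a * g y) x := fun ε hε => by
  simp only [mul_assoc]
  exact Integrable.const_mul (hg ε hε) a

lemma fracIntegrableAt_const (hα : 0 < α) (a : ℝ) (x : E) :
    FracIntegrableAt α (fun _ => a) x := fun ε hε => by
  have hmajorant : Integrable (fun y : E => (1 + ‖y - x‖) ^ (-((finrank ℝ E : ℝ) + α))) :=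
    (integrable_one_add_norm (lt_add_of_pos_right _ hα)).comp_sub_right x
  refine (Integrable.mono'
    (hmajorant.const_mul (((1 + ε) / ε) ^ ((finrank ℝ E : ℝ) + α))).integrableOn
    (measurable_fracKernel α x).aestronglyMeasurable ?_).const_mul a
  filter_upwards [ae_restrict_mem measurableSet_ball.compl] with y hy
  have hy : ε ≤ dist x y := by simpa [dist_comm] using hy
  have hpos : 0 < dist x y := hε.trans_le hy
  rw [Real.norm_of_nonneg (fracKernel_nonneg α x y), fracKernel, ← dist_eq_norm, dist_comm y x,
    Real.rpow_neg (by positivity), ← div_eq_mul_inv,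
    ← Real.div_rpow (by positivity) (by positivity), ← Real.inv_rpow hpos.le]
  refine Real.rpow_le_rpow (by positivity) ?_ (by positivity)
  rw [inv_eq_one_div, div_div, div_le_div_iff₀ hpos (by positivity)]
  linarith

lemma FracIntegrableAt.of_integrable (hα : 0 < α)
    (hmeas : AEStronglyMeasurable g)
    (hg : Integrable fun y => |g y| / (1 + ‖y‖ ^ ((finrank ℝ E : ℝ) + α))) (x : E) :
    FracIntegrableAt α g x := fun ε hε => by
  have hk : 0 < (finrank ℝ E : ℝ) + α := by positivity
  refine Integrable.mono' (hg.const_mul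
    ((ε ^ ((finrank ℝ E : ℝ) + α))⁻¹ + (‖x‖ / ε + 1) ^ ((finrank ℝ E : ℝ) + α))).integrableOn
    (hmeas.restrict.mul (measurable_fracKernel α x).aestronglyMeasurable) ?_
  filter_upwards [ae_restrict_mem measurableSet_ball.compl] with y hy
  have hy : ε ≤ dist x y := by simpa [dist_comm] using hy
  have hpos : 0 < dist x y := hε.trans_le hy
  have hnorm : ‖y‖ ≤ (‖x‖ / ε + 1) * dist x y := by
    have hx : ‖x‖ ≤ ‖x‖ / ε * dist x y := by
      rw [div_mul_eq_mul_div, le_div_iff₀ hε]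
      exact mul_le_mul_of_nonneg_left hy (norm_nonneg x)
    have := norm_le_norm_add_norm_sub x y
    rw [← dist_eq_norm] at this
    linarith
  have hone : 1 ≤ (ε ^ ((finrank ℝ E : ℝ) + α))⁻¹ * dist x y ^ ((finrank ℝ E : ℝ) + α) := by
    rw [inv_mul_eq_div, one_le_div (by positivity)]
    exact Real.rpow_le_rpow hε.le hy hk.le
  have hpow := Real.rpow_le_rpow (norm_nonneg y) hnorm hk.le
  rw [Real.mul_rpow (by positivity) hpos.le] at hpow
  rw [norm_mul, Real.norm_eq_abs, Real.norm_of_nonneg (fracKernel_nonneg α x y), fracKernel,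
    ← div_eq_mul_inv, ← mul_div_assoc, div_le_div_iff₀ (by positivity) (by positivity),
    mul_right_comm, mul_comm]
  refine mul_le_mul_of_nonneg_right ?_ (abs_nonneg _)
  rw [add_mul]
  exact add_le_add hone hpow

lemma HasFracLapAt.sub (hα : 0 < α) {L L' : ℝ} (hL : HasFracLapAt α g x L)
    (hL' : HasFracLapAt α h x L') (hg : FracIntegrableAt α g x) (hh : FracIntegrableAt α h x) :
    HasFracLapAt α (fun y => g y - h y) x (L - L') := by
  refine (Tendsto.sub hL hL').congr' ?_
  filter_upwards [self_mem_nhdsWithin] with ε hε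
  rw [← integral_sub (((fracIntegrableAt_const hα _ x).sub hg) ε hε)
    (((fracIntegrableAt_const hα _ x).sub hh) ε hε)]
  congr 1 with y
  ring

lemma HasFracLapAt.const_mul {L : ℝ} (hL : HasFracLapAt α g x L) (a : ℝ) :
    HasFracLapAt α (fun y => a * g y) x (a * L) := by
  refine (Tendsto.const_mul a hL).congr fun ε => ?_
  rw [← integral_const_mul]
  congr 1 with y
  ring

end Kernel

section KelvinInvariance

variable {E : Type*} [NormedAddCommGroup E] [InnerProductSpace ℝ E] [FiniteDimensional ℝ E]
  [MeasurableSpace E] [BorelSpace E] [Nontrivial E] {α ρ : ℝ} {c x : E} {g : E → ℝ}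

lemma ae_restrict_ne (s : Set E) (c : E) : ∀ᵐ y ∂volume.restrict s, y ≠ c :=
  ae_restrict_of_ae (Measure.ae_ne volume c)

lemma setIntegral_mul_fracKernel_inversion (hρ : 0 < ρ) (hx : x ≠ c) {A : Set E}
    (hA : MeasurableSet A) (g : E → ℝ) :
    ∫ z in A, g z * fracKernel α (inversion c ρ x) z
      = (dist x c / ρ) ^ ((finrank ℝ E : ℝ) + α) *
        ∫ y in inversion c ρ ⁻¹' A, kelvinTransform α c ρ g y * fracKernel α x y := by
  rw [setIntegral_eq_setIntegral_inversion c hρ.ne' hA, ← integral_const_mul]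
  refine integral_congr_ae ?_
  filter_upwards [ae_restrict_ne _ c] with y hy
  exact mul_fracKernel_inversion α hρ hx hy g

lemma integrableOn_mul_fracKernel_inversion_iff (hρ : 0 < ρ) (hx : x ≠ c) {A : Set E}
    (hA : MeasurableSet A) :
    IntegrableOn (fun z => g z * fracKernel α (inversion c ρ x) z) A ↔
      IntegrableOn (fun y => kelvinTransform α c ρ g y * fracKernel α x y)
        (inversion c ρ ⁻¹' A) := by
  have hxc := dist_pos.2 hx
  have hpos : 0 < (dist x c / ρ) ^ ((finrank ℝ E : ℝ) + α) := by positivity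
  rw [integrableOn_iff_integrableOn_inversion c hρ.ne' hA,
    IntegrableOn, IntegrableOn,
    ← integrable_const_mul_iff (isUnit_iff_ne_zero.2 hpos.ne')
      (fun y => kelvinTransform α c ρ g y * fracKernel α x y)]
  refine integrable_congr ?_
  filter_upwards [ae_restrict_ne _ c] with y hy
  exact mul_fracKernel_inversion α hρ hx hy g

lemma FracIntegrableAt.kelvinTransform (hρ : 0 < ρ) (hx : x ≠ c)
    (hg : FracIntegrableAt α g (inversion c ρ x)) :
    FracIntegrableAt α (kelvinTransform α c ρ g) x := fun τ hτ => by
  have hxc := dist_pos.2 hx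
  have : 0 < (dist x c / τ + 1)⁻¹ * dist x c := by positivity
  have hint := (integrableOn_mul_fracKernel_inversion_iff hρ hx measurableSet_ball.compl).1
    (hg ((dist x c / τ + 1)⁻¹ * dist x c * (ρ ^ 2 / dist x c ^ 2)) (by positivity))
  rw [← integrableOn_congr_set_ae (diff_center_ae_eq c _)]
  refine hint.mono_set fun y hy => ?_
  have hyτ : τ ≤ dist x y := by simpa [dist_comm] using hy.1
  rw [mem_preimage_inversion_compl_ball hρ hx hy.2, mul_right_comm]
  refine mul_le_mul_of_nonneg_right ?_ hxc.le
  rw [inv_mul_le_iff₀ (by positivity), add_mul, one_mul]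
  calc dist y c ≤ dist x c + dist x y := by
        rw [add_comm, dist_comm x y]
        exact dist_triangle y x c
    _ ≤ dist x c / τ * dist x y + dist x y := by
        gcongr
        rw [div_mul_eq_mul_div, le_div_iff₀ hτ]
        gcongr

end KelvinInvariance

section PrincipalValue

lemma eventually_mul_le_half (C : ℝ) : ∀ᶠ τ in 𝓝[>] (0 : ℝ), C * τ ≤ 1 / 2 := by
  have hlim : Tendsto (fun τ : ℝ => C * τ) (𝓝 0) (𝓝 0) := by
    simpa using (continuous_const_mul C).tendsto 0
  exact nhdsWithin_le_nhds (hlim.eventually_le_const one_half_pos)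

variable {E : Type*} [NormedAddCommGroup E] [InnerProductSpace ℝ E]

lemma abs_dist_sub_le_of_mem_symmDiff {c x y : E} {ρ τ : ℝ} (hρ : 0 < ρ) (hx : x ≠ c)
    (hτ : 0 < τ) (hτx : τ ≤ dist x c / 8)
    (hy : y ∈ symmDiff
      (inversion c ρ ⁻¹' (ball (inversion c ρ x) (τ * (ρ ^ 2 / dist x c ^ 2)))ᶜ) (ball x τ)ᶜ) :
    |dist x y - τ| ≤ 2 / dist x c * τ ^ 2 := by
  have hxc := dist_pos.2 hx
  have hupper : dist y c ≤ dist x y + dist x c := by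
    rw [dist_comm x y]
    exact dist_triangle y x c
  have hlower := dist_triangle x y c
  have hball : y ∈ (ball x τ)ᶜ ↔ τ ≤ dist x y := by simp [dist_comm]
  rw [Set.mem_symmDiff, hball] at hy
  rcases eq_or_ne y c with rfl | hyc
  · have hmem : y ∈ inversion y ρ ⁻¹' (ball (inversion y ρ x) (τ * (ρ ^ 2 / dist x y ^ 2)))ᶜ := by
      rw [mem_preimage, inversion_self, mem_compl_iff, mem_ball, not_lt,
        dist_comm y (inversion _ _ _), dist_inversion_center]
      calc τ * (ρ ^ 2 / dist x y ^ 2) ≤ dist x y * (ρ ^ 2 / dist x y ^ 2) := by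
            gcongr
            linarith
        _ = ρ ^ 2 / dist x y := by field_simp
    rcases hy with ⟨-, hlt⟩ | ⟨-, hnot⟩
    · exact absurd (hτx.trans (by linarith)) hlt
    · exact absurd hmem hnot
  rw [mem_preimage_inversion_compl_ball hρ hx hyc, not_le, not_le] at hy
  have := dist_nonneg (x := x) (y := y)
  rw [div_mul_eq_mul_div, abs_le, neg_le, le_div_iff₀ hxc, le_div_iff₀ hxc]
  rcases hy with ⟨h₁, h₂⟩ | ⟨h₁, h₂⟩ <;> constructor <;> nlinarith

variable [FiniteDimensional ℝ E] [MeasurableSpace E] [BorelSpace E]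

lemma exists_measureReal_le_of_abs_dist_sub_le {C : ℝ} (hC : 0 ≤ C) (x : E) :
    ∃ V, ∀ τ > 0, C * τ ≤ 1 / 2 → ∀ s : Set E,
      (∀ y ∈ s, |dist x y - τ| ≤ C * τ ^ 2) → volume.real s ≤ V * τ ^ (finrank ℝ E + 1) := by
  refine ⟨2 * C * finrank ℝ E * 2 ^ (finrank ℝ E - 1) * volume.real (ball (0 : E) 1),
    fun τ hτ hCτ s hs => ?_⟩
  have hη : 0 ≤ C * τ := by positivity
  have hinner : 0 < τ * (1 - C * τ) := mul_pos hτ (by linarith)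
  have hball : volume.real (ball x (τ * (1 - C * τ)))
      = (τ * (1 - C * τ)) ^ finrank ℝ E * volume.real (ball (0 : E) 1) := by
    rw [measureReal_def, Measure.addHaar_ball_of_pos _ _ hinner, ENNReal.toReal_mul,
      ENNReal.toReal_ofReal (by positivity), measureReal_def]
  have hsub : s ⊆ closedBall x (τ * (1 + C * τ)) \ ball x (τ * (1 - C * τ)) := fun y hy => by
    have hshell := abs_le.1 (hs y hy)
    rw [Set.mem_sdiff, mem_closedBall, mem_ball, not_lt, dist_comm]
    constructor <;> nlinarith
  have hballs : ball x (τ * (1 - C * τ)) ⊆ closedBall x (τ * (1 + C * τ)) :=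
    ball_subset_closedBall.trans (closedBall_subset_closedBall (by gcongr; linarith))
  have hpow : (1 + C * τ) ^ finrank ℝ E - (1 - C * τ) ^ finrank ℝ E
      ≤ 2 * (C * τ) * finrank ℝ E * 2 ^ (finrank ℝ E - 1) := by
    refine (le_abs_self _).trans ((abs_pow_sub_pow_le _ _ _).trans ?_)
    have hdiff : |1 + C * τ - (1 - C * τ)| = 2 * (C * τ) := by
      rw [abs_of_nonneg] <;> linarith
    rw [hdiff]
    gcongr
    exact max_le (by rw [abs_le]; constructor <;> linarith)
      (by rw [abs_le]; constructor <;> linarith)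
  calc volume.real s
      ≤ volume.real (closedBall x (τ * (1 + C * τ)) \ ball x (τ * (1 - C * τ))) :=
        measureReal_mono hsub
          (measure_ne_top_of_subset sdiff_subset measure_closedBall_lt_top.ne)
    _ = τ ^ finrank ℝ E * ((1 + C * τ) ^ finrank ℝ E - (1 - C * τ) ^ finrank ℝ E)
          * volume.real (ball (0 : E) 1) := by
        rw [measureReal_sdiff hballs measurableSet_ball measure_closedBall_lt_top.ne, hball,
          Measure.addHaar_real_closedBall _ _ (by positivity), mul_pow, mul_pow]
        ring
    _ ≤ τ ^ finrank ℝ E * (2 * (C * τ) * finrank ℝ E * 2 ^ (finrank ℝ E - 1))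
          * volume.real (ball (0 : E) 1) := by gcongr
    _ = _ := by ring

lemma exists_norm_setIntegral_le_of_abs_dist_sub_le {α C : ℝ} (hα : 0 < α) (hC : 0 ≤ C)
    {x : E} {N : E → ℝ} (hN : N =O[𝓝 x] fun y => y - x) :
    ∃ M, ∀ᶠ τ in 𝓝[>] (0 : ℝ), ∀ s : Set E, (∀ y ∈ s, |dist x y - τ| ≤ C * τ ^ 2) →
      ‖∫ y in s, N y * fracKernel α x y‖ ≤ M * τ ^ (2 - α) := by
  obtain ⟨V, hvol⟩ := exists_measureReal_le_of_abs_dist_sub_le hC x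
  obtain ⟨B, hB, hNB⟩ := hN.exists_pos
  obtain ⟨r, hr, hball⟩ := Metric.eventually_nhds_iff.1 hNB.bound
  set k := (finrank ℝ E : ℝ) + α with hk
  have : 0 < k := by positivity
  refine ⟨B * 2 * 2 ^ k * V, ?_⟩
  filter_upwards [self_mem_nhdsWithin, eventually_mul_le_half C,
    nhdsWithin_le_nhds (eventually_lt_nhds (half_pos hr))] with τ hτ hCτ hτr s hs
  have hτ : 0 < τ := hτ
  have hshell : ∀ y ∈ s, τ / 2 ≤ dist x y ∧ dist x y ≤ 2 * τ := fun y hy => by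
    have := abs_le.1 (hs y hy)
    constructor <;> nlinarith
  have hfinite : volume s < ⊤ := (measure_mono fun y hy => by
    rw [mem_closedBall, dist_comm]
    exact (hshell y hy).2).trans_lt (measure_closedBall_lt_top (x := x) (r := 2 * τ))
  have hpointwise : ∀ y ∈ s, ‖N y * fracKernel α x y‖ ≤ B * (2 * τ) * ((τ / 2) ^ k)⁻¹ :=
    fun y hy => by
      obtain ⟨hlow, hup⟩ := hshell y hy
      have hNy := hball (show dist y x < r by rw [dist_comm]; linarith)
      rw [← dist_eq_norm, dist_comm] at hNy
      rw [norm_mul, Real.norm_of_nonneg (fracKernel_nonneg α x y), fracKernel, ← hk]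
      gcongr
      exact hNy.trans (by gcongr)
  have hexp : τ ^ (2 - α) = τ * τ ^ (finrank ℝ E + 1) * (τ ^ k)⁻¹ := by
    rw [← Real.rpow_neg hτ.le, ← Real.rpow_natCast, ← Real.rpow_one_add' hτ.le (by positivity),
      ← Real.rpow_add hτ, hk]
    congr 1
    push_cast
    ring
  calc ‖∫ y in s, N y * fracKernel α x y‖
      ≤ B * (2 * τ) * ((τ / 2) ^ k)⁻¹ * volume.real s :=
        norm_setIntegral_le_of_norm_le_const hfinite hpointwise
    _ ≤ B * (2 * τ) * ((τ / 2) ^ k)⁻¹ * (V * τ ^ (finrank ℝ E + 1)) := by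
        gcongr
        exact hvol τ hτ hCτ s hs
    _ = B * 2 * 2 ^ k * V * τ ^ (2 - α) := by
        rw [Real.div_rpow hτ.le zero_le_two, inv_div, hexp]
        ring

lemma tendsto_setIntegral_sub_of_symmDiff {α C : ℝ} (hα : α ∈ Ioo (0 : ℝ) 2) (hC : 0 ≤ C)
    {x : E} {N : E → ℝ} (hN : N =O[𝓝 x] fun y => y - x) (hint : FracIntegrableAt α N x)
    {A : ℝ → Set E} (hmeas : ∀ τ, MeasurableSet (A τ))
    (hA : ∀ᶠ τ in 𝓝[>] (0 : ℝ), ∀ y ∈ symmDiff (A τ) (ball x τ)ᶜ, |dist x y - τ| ≤ C * τ ^ 2) :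
    Tendsto (fun τ => (∫ y in A τ, N y * fracKernel α x y)
      - ∫ y in (ball x τ)ᶜ, N y * fracKernel α x y) (𝓝[>] 0) (𝓝 0) := by
  obtain ⟨M, hM⟩ := exists_norm_setIntegral_le_of_abs_dist_sub_le hα.1 hC hN
  have hbound : Tendsto (fun τ : ℝ => M * τ ^ (2 - α) + M * τ ^ (2 - α)) (𝓝[>] 0) (𝓝 0) := by
    have hpow := (Real.continuousAt_rpow_const 0 (2 - α) (Or.inr (by linarith [hα.2]))).tendsto
    rw [Real.zero_rpow (by linarith [hα.2])] at hpow
    have hpow := tendsto_nhdsWithin_of_tendsto_nhds (s := Ioi 0) hpow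
    simpa using (hpow.const_mul M).add (hpow.const_mul M)
  refine squeeze_zero_norm' ?_ hbound
  filter_upwards [self_mem_nhdsWithin, hM, hA, eventually_mul_le_half C]
    with τ hτ hM hA hCτ
  have hτ : 0 < τ := hτ
  have hint_ball : IntegrableOn (fun y => N y * fracKernel α x y) (ball x τ)ᶜ := hint τ hτ
  have hint_A : IntegrableOn (fun y => N y * fracKernel α x y) (A τ) := by
    refine (hint (τ / 2) (by positivity)).mono_set fun y hy => ?_
    rw [mem_compl_iff, mem_ball, not_lt, dist_comm]
    by_cases hyball : y ∈ (ball x τ)ᶜ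
    · have : τ ≤ dist x y := by simpa [dist_comm] using hyball
      linarith
    · have := abs_le.1 (hA y (Or.inl ⟨hy, hyball⟩))
      nlinarith
  have hsplit : (∫ y in A τ, N y * fracKernel α x y)
        - ∫ y in (ball x τ)ᶜ, N y * fracKernel α x y
      = (∫ y in A τ \ (ball x τ)ᶜ, N y * fracKernel α x y)
        - ∫ y in (ball x τ)ᶜ \ A τ, N y * fracKernel α x y := by
    rw [← integral_inter_add_sdiff measurableSet_ball.compl hint_A,
      ← integral_inter_add_sdiff (hmeas τ) hint_ball, inter_comm (A τ)]
    ring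
  rw [hsplit]
  exact (norm_sub_le _ _).trans (add_le_add (hM _ fun y hy => hA y (Or.inl hy))
    (hM _ fun y hy => hA y (Or.inr hy)))

variable [Nontrivial E]

lemma tendsto_setIntegral_sub_setIntegral_kelvinTransform {α : ℝ} (hα : α ∈ Ioo (0 : ℝ) 2)
    {c x : E} {ρ : ℝ} (hρ : 0 < ρ) (hx : x ≠ c) {h : E → ℝ}
    (hdiff : DifferentiableAt ℝ h (inversion c ρ x)) (hzero : h (inversion c ρ x) = 0)
    (hint : FracIntegrableAt α h (inversion c ρ x)) :
    Tendsto (fun τ => (∫ z in (ball (inversion c ρ x) (τ * (ρ ^ 2 / dist x c ^ 2)))ᶜ,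
        h z * fracKernel α (inversion c ρ x) z)
      - (dist x c / ρ) ^ ((finrank ℝ E : ℝ) + α) *
        ∫ y in (ball x τ)ᶜ, kelvinTransform α c ρ h y * fracKernel α x y) (𝓝[>] 0) (𝓝 0) := by
  have hxc := dist_pos.2 hx
  have hO : kelvinTransform α c ρ h =O[𝓝 x] fun y => y - x := by
    have hvalue : kelvinTransform α c ρ h x = 0 := by rw [kelvinTransform, hzero, mul_zero]
    simpa only [hvalue, sub_zero] using
      (differentiableAt_kelvinTransform α hρ hx hdiff).isBigO_sub
  have hlim := tendsto_setIntegral_sub_of_symmDiff hα (C := 2 / dist x c) (by positivity) hO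
    (hint.kelvinTransform hρ hx)
    (A := fun τ => inversion c ρ ⁻¹' (ball (inversion c ρ x) (τ * (ρ ^ 2 / dist x c ^ 2)))ᶜ)
    (fun τ => measurable_inversion c ρ measurableSet_ball.compl) (by
      filter_upwards [self_mem_nhdsWithin,
        nhdsWithin_le_nhds (eventually_le_nhds (show 0 < dist x c / 8 by positivity))]
        with τ hτ hτx y hy
      exact abs_dist_sub_le_of_mem_symmDiff hρ hx hτ hτx hy)
  have hscaled := hlim.const_mul ((dist x c / ρ) ^ ((finrank ℝ E : ℝ) + α))
  simpa only [mul_sub, mul_zero,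
    ← setIntegral_mul_fracKernel_inversion hρ hx measurableSet_ball.compl] using hscaled

end PrincipalValue

section KelvinLaplacian

variable {E : Type*} [NormedAddCommGroup E] [InnerProductSpace ℝ E] [FiniteDimensional ℝ E]
  [MeasurableSpace E] [BorelSpace E] [Nontrivial E] {α ρ : ℝ} {c x : E}

/-- Inversion in the sphere around `c` through `x` fixes `x` and sends the numerator
`φ x - φ y` to its negative, so the truncated integrals are asymptotically their own negatives. -/
lemma hasFracLapAt_kelvinTransform_one (hα : α ∈ Ioo (0 : ℝ) 2) (hρ : 0 < ρ) (hx : x ≠ c) :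
    HasFracLapAt α (kelvinTransform α c ρ fun _ => 1) x 0 := by
  have hxc := dist_pos.2 hx
  set φ : E → ℝ := kelvinTransform α c ρ fun _ => 1 with hφ
  have hfix : inversion c (dist x c) x = x := inversion_dist_center c x
  have hφ_int : FracIntegrableAt α φ x :=
    (fracIntegrableAt_const hα.1 1 _).kelvinTransform hρ hx
  have hφ_diff : DifferentiableAt ℝ φ x :=
    differentiableAt_kelvinTransform α hρ hx (differentiableAt_const 1)
  have hneg : ∀ y ≠ c, kelvinTransform α c (dist x c) (fun z => φ x - φ z) y = -(φ x - φ y) := by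
    intro y hy
    have hyc := dist_pos.2 hy
    simp only [hφ, kelvinTransform, mul_one, dist_inversion_center]
    rw [mul_sub, ← Real.mul_rpow (by positivity) (by positivity),
      ← Real.mul_rpow (by positivity) (by positivity), neg_sub]
    congr 2 <;> field_simp
  have hlim := tendsto_setIntegral_sub_setIntegral_kelvinTransform hα hxc hx
    (h := fun z => φ x - φ z) (by rw [hfix]; exact hφ_diff.const_sub _) (by rw [hfix, sub_self])
    (by rw [hfix]; exact (fracIntegrableAt_const hα.1 _ x).sub hφ_int)
  have hfold : ∀ τ, ∫ y in (ball x τ)ᶜ,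
        kelvinTransform α c (dist x c) (fun z => φ x - φ z) y * fracKernel α x y
      = -∫ y in (ball x τ)ᶜ, (φ x - φ y) * fracKernel α x y := fun τ => by
    rw [← integral_neg]
    refine integral_congr_ae ?_
    filter_upwards [ae_restrict_ne _ c] with y hy
    rw [hneg y hy, neg_mul]
  simp only [hfix, hfold, div_self hxc.ne', div_self (pow_ne_zero 2 hxc.ne'), Real.one_rpow,
    mul_one, one_mul, sub_neg_eq_add] at hlim
  have hhalf := hlim.const_mul (1 / 2)
  rw [mul_zero] at hhalf
  exact hhalf.congr fun τ => by ring

lemma tendsto_mul_const_nhdsGT_zero {a : ℝ} (ha : 0 < a) :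
    Tendsto (fun τ : ℝ => τ * a) (𝓝[>] 0) (𝓝[>] 0) := by
  refine tendsto_nhdsWithin_iff.2 ⟨?_, ?_⟩
  · simpa using tendsto_nhdsWithin_of_tendsto_nhds ((continuous_mul_const a).tendsto 0)
  · filter_upwards [self_mem_nhdsWithin] with τ hτ using mul_pos hτ ha

/-- Subtracting the value at the inverse point makes the integrand vanish there, so that the
symmetric difference of a ball with the inverted ball contributes nothing in the limit. -/
lemma tendsto_setIntegral_kelvinTransform_sub (hα : α ∈ Ioo (0 : ℝ) 2) (hρ : 0 < ρ) (hx : x ≠ c)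
    {g : E → ℝ} {L : ℝ} (hL : HasFracLapAt α g (inversion c ρ x) L)
    (hdiff : DifferentiableAt ℝ g (inversion c ρ x))
    (hint : FracIntegrableAt α g (inversion c ρ x)) :
    Tendsto (fun τ => ∫ y in (ball x τ)ᶜ,
      kelvinTransform α c ρ (fun z => g (inversion c ρ x) - g z) y * fracKernel α x y)
      (𝓝[>] 0) (𝓝 ((ρ / dist x c) ^ ((finrank ℝ E : ℝ) + α) * L)) := by
  have hxc := dist_pos.2 hx
  have hconst := fracIntegrableAt_const hα.1 (g (inversion c ρ x)) (inversion c ρ x)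
  have hcancel : (ρ / dist x c) ^ ((finrank ℝ E : ℝ) + α) *
      (dist x c / ρ) ^ ((finrank ℝ E : ℝ) + α) = 1 := by
    rw [← Real.mul_rpow (by positivity) (by positivity), div_mul_div_cancel₀ hxc.ne',
      div_self hρ.ne', Real.one_rpow]
  have hperturb := tendsto_setIntegral_sub_setIntegral_kelvinTransform hα hρ hx
    (hdiff.const_sub (g (inversion c ρ x))) (sub_self _) (hconst.sub hint)
  have hscaled := ((Tendsto.comp hL (tendsto_mul_const_nhdsGT_zero
    (show 0 < ρ ^ 2 / dist x c ^ 2 by positivity))).sub hperturb).const_mul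
    ((ρ / dist x c) ^ ((finrank ℝ E : ℝ) + α))
  simpa only [Function.comp_apply, sub_sub_cancel, ← mul_assoc, hcancel, one_mul, sub_zero]
    using hscaled

theorem HasFracLapAt.kelvinTransform (hα : α ∈ Ioo (0 : ℝ) 2) (hρ : 0 < ρ) (hx : x ≠ c)
    {g : E → ℝ} {L : ℝ} (hL : HasFracLapAt α g (inversion c ρ x) L)
    (hdiff : DifferentiableAt ℝ g (inversion c ρ x))
    (hint : FracIntegrableAt α g (inversion c ρ x)) :
    HasFracLapAt α (kelvinTransform α c ρ g) x
      ((ρ / dist x c) ^ ((finrank ℝ E : ℝ) + α) * L) := by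
  have hconst := fracIntegrableAt_const hα.1 (g (inversion c ρ x)) (inversion c ρ x)
  have hφ := hasFracLapAt_kelvinTransform_one hα hρ hx
  have hsum := (hφ.const_mul (g (inversion c ρ x))).add
    (tendsto_setIntegral_kelvinTransform_sub hα hρ hx hL hdiff hint)
  rw [mul_zero, zero_add] at hsum
  refine hsum.congr' ?_
  filter_upwards [self_mem_nhdsWithin] with τ hτ
  have hφ_int : FracIntegrableAt α (_root_.kelvinTransform α c ρ fun _ => 1) x :=
    (fracIntegrableAt_const hα.1 1 _).kelvinTransform hρ hx
  have hleft := (((fracIntegrableAt_const hα.1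
    (_root_.kelvinTransform α c ρ (fun _ => 1) x) x).sub hφ_int).const_mul
      (g (inversion c ρ x))) τ hτ
  simp only [mul_sub] at hleft ⊢
  rw [← integral_add hleft ((hconst.sub hint).kelvinTransform hρ hx τ hτ)]
  congr 1 with y
  simp only [_root_.kelvinTransform]
  ring

end KelvinLaplacian

/-! ### Maximum principles for Kelvin-antisymmetric functions -/

section MaximumPrinciple

variable {E : Type*} [NormedAddCommGroup E] [InnerProductSpace ℝ E] {α ρ L : ℝ} {c x y : E}
  {w : E → ℝ}

/-- Antisymmetry under the Kelvin transform, the analogue for moving spheres of antisymmetry under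
the reflection in a moving plane. The pole `c` is excluded. -/
def IsKelvinAnti (α : ℝ) (c : E) (ρ : ℝ) (w : E → ℝ) : Prop :=
  ∀ y ≠ c, kelvinTransform α c ρ w y = -w y

/-- The kernel that the part of the fractional Laplacian of a Kelvin-antisymmetric function coming
from outside the ball `ball c ρ` acquires when it is moved into the ball by inversion. -/
noncomputable def reflectedKernel (α : ℝ) (c : E) (ρ : ℝ) (x y : E) : ℝ :=
  (ρ / dist x c) ^ ((finrank ℝ E : ℝ) + α) * fracKernel α (inversion c ρ x) y

/-- The integrand over `ball c ρ` in the fractional Laplacian at `x` of a Kelvin-antisymmetric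
function, once the integral over the complement has been moved into the ball by inversion. -/
noncomputable def foldedIntegrand (α : ℝ) (c : E) (ρ : ℝ) (w : E → ℝ) (x y : E) : ℝ :=
  (w x - w y) * fracKernel α x y + w y * reflectedKernel α c ρ x y

lemma IsKelvinAnti.eq_zero_of_mem_sphere (hw : IsKelvinAnti α c ρ w) (hρ : ρ ≠ 0)
    (hy : y ∈ sphere c ρ) : w y = 0 := by
  have hanti := hw y (ne_of_mem_sphere hy hρ)
  rw [kelvinTransform_of_mem_sphere α hρ hy] at hanti
  linarith

lemma reflectedKernel_nonneg (α : ℝ) (c : E) (hρ : 0 ≤ ρ) (x y : E) :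
    0 ≤ reflectedKernel α c ρ x y :=
  mul_nonneg (by positivity) (fracKernel_nonneg α _ y)

lemma reflectedKernel_lt_fracKernel (hα : 0 < α) (hx : x ∈ ball c ρ \ {c}) (hy : y ∈ ball c ρ)
    (hxy : x ≠ y) : reflectedKernel α c ρ x y < fracKernel α x y := by
  have hρ : 0 < ρ := dist_nonneg.trans_lt hy
  have hxc := dist_pos.2 hx.2
  have hlt := dist_lt_dist_inversion hy hx
  rw [dist_comm y x, dist_comm y] at hlt
  have hdist := dist_pos.2 hxy
  have heq : reflectedKernel α c ρ x y
      = ((dist x c / ρ * dist (inversion c ρ x) y) ^ ((finrank ℝ E : ℝ) + α))⁻¹ := by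
    rw [reflectedKernel, fracKernel, Real.mul_rpow (by positivity) dist_nonneg, mul_inv,
      ← Real.inv_rpow (div_nonneg dist_nonneg hρ.le), inv_div]
  rw [heq, fracKernel]
  exact inv_strictAnti₀ (by positivity) (Real.rpow_lt_rpow hdist.le hlt (by positivity))

lemma foldedIntegrand_eq :
    foldedIntegrand α c ρ w x y
      = w x * reflectedKernel α c ρ x y
        - (w y - w x) * (fracKernel α x y - reflectedKernel α c ρ x y) := by
  unfold foldedIntegrand
  ring

lemma foldedIntegrand_nonpos (hα : 0 < α) (hx : x ∈ ball c ρ \ {c}) (hy : y ∈ ball c ρ)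
    (hmin : w x ≤ w y) (hneg : w x ≤ 0) : foldedIntegrand α c ρ w x y ≤ 0 := by
  have hfirst := mul_nonpos_of_nonpos_of_nonneg hneg
    (reflectedKernel_nonneg α c (dist_nonneg.trans_lt hy).le x y)
  rw [foldedIntegrand_eq]
  rcases eq_or_ne x y with rfl | hxy
  · simpa only [sub_self, zero_mul, sub_zero] using hfirst
  · have hkernel := reflectedKernel_lt_fracKernel hα hx hy hxy
    linarith [mul_nonneg (sub_nonneg.2 hmin) (sub_nonneg.2 hkernel.le)]

lemma foldedIntegrand_neg (hα : 0 < α) (hx : x ∈ ball c ρ \ {c}) (hy : y ∈ ball c ρ)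
    (hxy : x ≠ y) (hwx : w x = 0) (hwy : 0 < w y) : foldedIntegrand α c ρ w x y < 0 := by
  rw [foldedIntegrand_eq, hwx, zero_mul, zero_sub, sub_zero, neg_lt_zero]
  exact mul_pos hwy (sub_pos.2 (reflectedKernel_lt_fracKernel hα hx hy hxy))

lemma ball_subset_compl_ball_inversion (c x : E) (ρ : ℝ) :
    ball c ρ ⊆ (ball (inversion c ρ x) (ρ ^ 2 / dist x c - ρ))ᶜ := by
  intro y hy
  rw [mem_compl_iff, mem_ball, not_lt, sub_le_iff_le_add]
  have htriangle := dist_triangle (inversion c ρ x) y c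
  rw [dist_inversion_center, dist_comm (inversion c ρ x)] at htriangle
  linarith [mem_ball.1 hy]

variable [FiniteDimensional ℝ E] [MeasurableSpace E] [BorelSpace E]

lemma tendsto_setIntegral_inter_ball [Nontrivial E] {f : E → ℝ} {B : Set E}
    (hf : IntegrableOn f B) (x : E) :
    Tendsto (fun τ => ∫ y in B ∩ ball x τ, f y) (𝓝[>] 0) (𝓝 0) := by
  have hvol : Tendsto (fun τ : ℝ => volume (ball x τ)) (𝓝[>] 0) (𝓝 0) := by
    have hpow : Tendsto (fun τ : ℝ => ENNReal.ofReal (τ ^ finrank ℝ E) * volume (ball (0 : E) 1))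
        (𝓝[>] 0) (𝓝 0) := by
      have hzero : Tendsto (fun τ : ℝ => τ ^ finrank ℝ E) (𝓝[>] 0) (𝓝 0) := by
        simpa [finrank_pos.ne'] using
          tendsto_nhdsWithin_of_tendsto_nhds ((continuous_pow (finrank ℝ E)).tendsto (0 : ℝ))
      simpa using ENNReal.Tendsto.mul_const (ENNReal.tendsto_ofReal hzero)
        (Or.inr (measure_ball_lt_top (μ := volume)).ne)
    refine hpow.congr' ?_
    filter_upwards [self_mem_nhdsWithin] with τ hτ
    exact (Measure.addHaar_ball_of_pos volume x hτ).symm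
  have hrestrict : Tendsto (fun τ => volume.restrict B (ball x τ)) (𝓝[>] 0) (𝓝 0) :=
    tendsto_of_tendsto_of_tendsto_of_le_of_le tendsto_const_nhds hvol (fun _ => zero_le)
      fun _ => Measure.restrict_apply_le _ _
  refine (hf.hasFiniteIntegral.tendsto_setIntegral_nhds_zero hrestrict).congr fun τ => ?_
  rw [Measure.restrict_restrict measurableSet_ball, inter_comm]

lemma integrableOn_mul_reflectedKernel (hx : x ∈ ball c ρ \ {c})
    (hw : FracIntegrableAt α w (inversion c ρ x)) :
    IntegrableOn (fun y => w y * reflectedKernel α c ρ x y) (ball c ρ) := by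
  have hxc := dist_pos.2 hx.2
  have hxρ : dist x c < ρ := hx.1
  have hgap : 0 < ρ ^ 2 / dist x c - ρ := by
    rw [sub_pos, lt_div_iff₀ hxc, sq]
    exact mul_lt_mul_of_pos_left hxρ (hxc.trans hxρ)
  refine (((hw _ hgap).mono_set (ball_subset_compl_ball_inversion c x ρ)).const_mul
    ((ρ / dist x c) ^ ((finrank ℝ E : ℝ) + α))).congr (Eventually.of_forall fun y => ?_)
  exact mul_left_comm _ _ _

lemma compl_ball_ae_eq_compl_closedBall (hρ : ρ ≠ 0) :
    ((ball c ρ)ᶜ : Set E) =ᵐ[volume] ((closedBall c ρ)ᶜ : Set E) := by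
  rw [← sphere_union_ball, compl_union]
  exact (inter_ae_eq_right_of_ae_eq_univ (compl_mem_ae_iff.2
    (Measure.addHaar_sphere_of_ne_zero volume c hρ) |> eventuallyEq_univ.2)).symm

lemma integrableOn_sub_mul_fracKernel (hα : 0 < α) (hw : FracIntegrableAt α w x) {s : ℝ}
    (hs : 0 < s) : IntegrableOn (fun y => (w x - w y) * fracKernel α x y) (ball x s)ᶜ :=
  ((fracIntegrableAt_const hα (w x) x).sub hw) s hs

lemma integrableOn_foldedIntegrand (hα : 0 < α) (hx : x ∈ ball c ρ \ {c})
    (hw : FracIntegrableAt α w x) (hw' : FracIntegrableAt α w (inversion c ρ x)) {S : Set E}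
    {s : ℝ} (hs : 0 < s) (hS : S ⊆ ball c ρ \ ball x s) :
    IntegrableOn (foldedIntegrand α c ρ w x) S :=
  ((integrableOn_sub_mul_fracKernel hα hw hs).mono_set fun _ hy => (hS hy).2).add
    ((integrableOn_mul_reflectedKernel hx hw').mono_set fun _ hy => (hS hy).1)

lemma setIntegral_foldedIntegrand_neg (hα : 0 < α) (hx : x ∈ ball c ρ \ {c})
    (hw : FracIntegrableAt α w x) (hw' : FracIntegrableAt α w (inversion c ρ x)) {z : E} {s : ℝ}
    (hs : 0 < s) (hzs : ball z s ⊆ ball c ρ \ ball x s) (hwx : w x = 0)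
    (hpos : ∀ y ∈ ball z s, 0 < w y) :
    ∫ y in ball z s, foldedIntegrand α c ρ w x y < 0 := by
  have hneg : ∀ y ∈ ball z s, 0 < -foldedIntegrand α c ρ w x y := fun y hy =>
    neg_pos.2 <| foldedIntegrand_neg hα hx (hzs hy).1 (fun h => (hzs hy).2 (h ▸ mem_ball_self hs))
      hwx (hpos y hy)
  have hsupport : ball z s ⊆ Function.support (-foldedIntegrand α c ρ w x) :=
    fun y hy => (hneg y hy).ne'
  rw [← neg_pos, ← integral_neg]
  refine (setIntegral_pos_iff_support_of_nonneg_ae ?_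
    (integrableOn_foldedIntegrand hα hx hw hw' hs hzs).neg).2 ?_
  · filter_upwards [ae_restrict_mem measurableSet_ball] with y hy using (hneg y hy).le
  · rw [inter_eq_right.2 hsupport]
    exact measure_ball_pos _ _ hs

variable [Nontrivial E]

lemma setIntegral_compl_ball_eq_neg (hx : x ∈ ball c ρ \ {c}) (hanti : IsKelvinAnti α c ρ w) :
    ∫ y in (ball c ρ)ᶜ, w y * fracKernel α x y
      = -∫ y in ball c ρ, w y * reflectedKernel α c ρ x y := by
  have hρ : 0 < ρ := dist_nonneg.trans_lt hx.1
  have := dist_pos.2 hx.2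
  have hinv := setIntegral_mul_fracKernel_inversion (α := α) hρ
    ((inversion_eq_center hρ.ne').not.2 hx.2) (measurableSet_closedBall (x := c) (ε := ρ)).compl w
  rw [inversion_inversion c hρ.ne', preimage_inversion_compl_closedBall c hρ,
    dist_inversion_center, setIntegral_congr_set (diff_center_ae_eq c _), sq, mul_div_assoc,
    mul_div_cancel_left₀ _ hρ.ne'] at hinv
  rw [setIntegral_congr_set (compl_ball_ae_eq_compl_closedBall hρ.ne'), hinv,
    ← integral_const_mul, ← integral_neg]
  refine integral_congr_ae ?_
  filter_upwards [ae_restrict_ne _ c] with y hy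
  rw [hanti y hy, reflectedKernel]
  ring

lemma setIntegral_compl_ball_add_setIntegral (hα : 0 < α) (hx : x ∈ ball c ρ \ {c})
    (hanti : IsKelvinAnti α c ρ w) (hw : FracIntegrableAt α w x)
    (hw' : FracIntegrableAt α w (inversion c ρ x)) {τ : ℝ} (hτ : 0 < τ)
    (hτρ : τ ≤ ρ - dist x c) :
    ∫ y in (ball x τ)ᶜ, (w x - w y) * fracKernel α x y
      = w x * (∫ y in (ball c ρ)ᶜ, fracKernel α x y)
        + (∫ y in ball c ρ \ ball x τ, foldedIntegrand α c ρ w x y)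
        + ∫ y in ball c ρ ∩ ball x τ, w y * reflectedKernel α c ρ x y := by
  have hsub : (ball c ρ)ᶜ ⊆ (ball x τ)ᶜ :=
    compl_subset_compl.2 (ball_subset_ball' (by linarith))
  have hquot := integrableOn_sub_mul_fracKernel hα hw hτ
  have hrefl := integrableOn_mul_reflectedKernel hx hw'
  have hsplit := integral_inter_add_sdiff (measurableSet_ball (x := c) (ε := ρ)) hquot
  have hrefl_split := integral_inter_add_sdiff (measurableSet_ball (x := x) (ε := τ)) hrefl
  have hinside : (ball x τ)ᶜ ∩ ball c ρ = ball c ρ \ ball x τ := inter_comm _ _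
  have houtside : (ball x τ)ᶜ \ ball c ρ = (ball c ρ)ᶜ := inter_eq_right.2 hsub
  have hexterior : ∫ y in (ball c ρ)ᶜ, (w x - w y) * fracKernel α x y
      = w x * (∫ y in (ball c ρ)ᶜ, fracKernel α x y)
        + ∫ y in ball c ρ, w y * reflectedKernel α c ρ x y := by
    simp only [sub_mul]
    rw [integral_sub ((fracIntegrableAt_const hα (w x) x τ hτ).mono_set hsub)
      ((hw τ hτ).mono_set hsub), integral_const_mul, setIntegral_compl_ball_eq_neg hx hanti,
      sub_neg_eq_add]
  have hfolded : ∫ y in ball c ρ \ ball x τ, foldedIntegrand α c ρ w x y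
      = (∫ y in ball c ρ \ ball x τ, (w x - w y) * fracKernel α x y)
        + ∫ y in ball c ρ \ ball x τ, w y * reflectedKernel α c ρ x y :=
    integral_add (hquot.mono_set fun _ hy => hy.2) (hrefl.mono_set sdiff_subset)
  rw [hinside, houtside] at hsplit
  linarith

/-- At a nonpositive minimum over the punctured ball, every part of the folded integral may be
discarded. -/
theorem HasFracLapAt.le_of_isMinOn (hL : HasFracLapAt α w x L) (hα : 0 < α)
    (hx : x ∈ ball c ρ \ {c}) (hanti : IsKelvinAnti α c ρ w) (hw : FracIntegrableAt α w x)
    (hw' : FracIntegrableAt α w (inversion c ρ x)) (hmin : IsMinOn w (ball c ρ \ {c}) x)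
    (hneg : w x ≤ 0) {S : Set E} {s : ℝ} (hs : 0 < s) (hS : S ⊆ ball c ρ \ ball x s) :
    L ≤ w x * (∫ y in (ball c ρ)ᶜ, fracKernel α x y) + ∫ y in S, foldedIntegrand α c ρ w x y := by
  have hlim := Tendsto.sub hL (tendsto_setIntegral_inter_ball
    (integrableOn_mul_reflectedKernel hx hw') x)
  rw [sub_zero] at hlim
  refine le_of_tendsto hlim ?_
  have hsmall : ∀ᶠ τ in 𝓝[>] (0 : ℝ), τ ≤ min (ρ - dist x c) s :=
    nhdsWithin_le_nhds (eventually_le_nhds (lt_min (sub_pos.2 hx.1) hs))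
  filter_upwards [hsmall, self_mem_nhdsWithin] with τ hτle hτ
  have hτ : 0 < τ := hτ
  rw [setIntegral_compl_ball_add_setIntegral hα hx hanti hw hw' hτ (hτle.trans (min_le_left _ _)),
    add_sub_cancel_right, add_le_add_iff_left]
  have hnonpos : ∀ᵐ y ∂volume.restrict (ball c ρ \ ball x τ),
      0 ≤ -foldedIntegrand α c ρ w x y := by
    filter_upwards [ae_restrict_mem (measurableSet_ball.diff measurableSet_ball),
      ae_restrict_ne _ c] with y hy hyc
    exact neg_nonneg.2 (foldedIntegrand_nonpos hα hx hy.1 (hmin ⟨hy.1, hyc⟩) hneg)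
  have hSsub : S ⊆ ball c ρ \ ball x τ :=
    hS.trans (sdiff_subset_sdiff_right (ball_subset_ball (hτle.trans (min_le_right _ _))))
  have hmono := setIntegral_mono_set
    (integrableOn_foldedIntegrand hα hx hw hw' hτ subset_rfl).neg hnonpos hSsub.eventuallyLE
  simp only [Pi.neg_apply, integral_neg] at hmono
  exact neg_le_neg_iff.1 hmono

/-- Strong maximum principle: a zero inside the punctured ball would be a minimum at which the
folded integral near `z` is negative. -/
theorem HasFracLapAt.pos_of_nonneg (hL : HasFracLapAt α w x L) (hα : 0 < α)
    (hx : x ∈ ball c ρ \ {c}) (hanti : IsKelvinAnti α c ρ w) (hw : FracIntegrableAt α w x)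
    (hw' : FracIntegrableAt α w (inversion c ρ x)) (hnonneg : ∀ y ∈ ball c ρ \ {c}, 0 ≤ w y)
    (hL_nonneg : 0 ≤ L) {z : E} (hz : z ∈ ball c ρ) (hcont : ContinuousAt w z)
    (hwz : 0 < w z) : 0 < w x := by
  refine (hnonneg x hx).lt_of_ne fun hzero => ?_
  have hxz : x ≠ z := by
    rintro rfl
    exact hwz.ne hzero
  obtain ⟨r, hr, hball⟩ := Metric.eventually_nhds_iff_ball.1
    ((hcont.eventually (lt_mem_nhds hwz)).and (isOpen_ball.mem_nhds hz))
  have hs : 0 < min r (dist x z / 2) := lt_min hr (half_pos (dist_pos.2 hxz))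
  have hsr : ball z (min r (dist x z / 2)) ⊆ ball z r := ball_subset_ball (min_le_left _ _)
  have hzs : ball z (min r (dist x z / 2)) ⊆ ball c ρ \ ball x (min r (dist x z / 2)) := by
    refine fun y hy => ⟨(hball y (hsr hy)).2, fun hyx => ?_⟩
    have htriangle := dist_triangle_left x z y
    rw [mem_ball] at hy hyx
    linarith [min_le_right r (dist x z / 2)]
  have hle := hL.le_of_isMinOn hα hx hanti hw hw' (fun y hy => hzero ▸ hnonneg y hy)
    hzero.symm.le hs hzs
  rw [← hzero, zero_mul, zero_add] at hle
  exact (hL_nonneg.trans hle).not_gt <| setIntegral_foldedIntegrand_neg hα hx hw hw' hs hzs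
    hzero.symm fun y hy => (hball y (hsr hy)).1

end MaximumPrinciple

/-! ### Spheres through the origin -/

section KelvinDiff

variable {E : Type*} [NormedAddCommGroup E] [InnerProductSpace ℝ E] {α L L' : ℝ} {c x y : E}
  {g : E → ℝ}

/-- The difference between `g` and its Kelvin transform in the sphere through the origin centred at
`c`, the function to which the method of moving spheres is applied. -/
noncomputable def kelvinDiff (α : ℝ) (g : E → ℝ) (c y : E) : ℝ :=
  kelvinTransform α c ‖c‖ g y - g y

/-- `g` is at most its Kelvin transform in the sphere through the origin centred at `c`, inside that
sphere. -/
def IsKelvinDominated (α : ℝ) (g : E → ℝ) (c : E) : Prop :=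
  ∀ y ∈ ball c ‖c‖ \ {c}, 0 ≤ kelvinDiff α g c y

lemma isKelvinAnti_kelvinDiff (α : ℝ) (g : E → ℝ) (hc : c ≠ 0) :
    IsKelvinAnti α c ‖c‖ (kelvinDiff α g c) := fun y hy => by
  unfold kelvinDiff
  rw [kelvinTransform_sub, kelvinTransform_kelvinTransform α g (norm_pos_iff.2 hc) hy, neg_sub]

lemma continuousAt_kelvinDiff (α : ℝ) (hg : Continuous g) (hc : c ≠ 0) (hy : y ≠ c) :
    ContinuousAt (fun p : E × E => kelvinDiff α g p.1 p.2) (c, y) := by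
  have hdist : dist y c ≠ 0 := dist_ne_zero.2 hy
  have hinv : ContinuousAt (fun p : E × E => inversion p.1 ‖p.1‖ p.2) (c, y) :=
    ContinuousAt.inversion (by fun_prop) (by fun_prop) (by fun_prop) hy
  have hratio : ContinuousAt (fun p : E × E => ‖p.1‖ / dist p.2 p.1) (c, y) :=
    ContinuousAt.div (by fun_prop) (by fun_prop) hdist
  exact ((hratio.rpow_const (Or.inl (div_ne_zero (norm_ne_zero_iff.2 hc) hdist))).mul
    (hg.continuousAt.comp hinv)).sub (hg.continuousAt.comp continuousAt_snd)

lemma kelvinTransform_norm (α : ℝ) (g : E → ℝ) (hc : c ≠ 0) (hyc : y ≠ c) (hy : y ≠ 0) :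
    kelvinTransform α c ‖c‖ g y = ‖inversion c ‖c‖ y‖ ^ ((finrank ℝ E : ℝ) - α) *
      g (inversion c ‖c‖ y) * (‖y‖ ^ ((finrank ℝ E : ℝ) - α))⁻¹ := by
  have hpos : 0 < ‖y‖ := norm_pos_iff.2 hy
  rw [norm_inversion_norm hc hyc, Real.mul_rpow (by positivity) hpos.le, kelvinTransform]
  field_simp

lemma tendsto_norm_inversion_atTop (hc : c ≠ 0) :
    Tendsto (fun p : E × E => ‖inversion p.1 ‖p.1‖ p.2‖) (𝓝[{p | p.2 ≠ p.1}] (c, c)) atTop := by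
  have hdist : Tendsto (fun p : E × E => dist p.2 p.1) (𝓝[{p | p.2 ≠ p.1}] (c, c)) (𝓝[>] 0) := by
    refine tendsto_nhdsWithin_iff.2 ⟨?_, ?_⟩
    · rw [← dist_self c]
      exact ((continuous_snd.dist continuous_fst).tendsto (c, c)).mono_left nhdsWithin_le_nhds
    · filter_upwards [self_mem_nhdsWithin] with p hp using dist_pos.2 hp
  have hnorms : Tendsto (fun p : E × E => ‖p.1‖ * ‖p.2‖) (𝓝[{p | p.2 ≠ p.1}] (c, c))
      (𝓝 (‖c‖ * ‖c‖)) :=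
    ((by fun_prop : Continuous fun p : E × E => ‖p.1‖ * ‖p.2‖).tendsto (c, c)).mono_left
      nhdsWithin_le_nhds
  have : 0 < ‖c‖ := norm_pos_iff.2 hc
  refine (hnorms.pos_mul_atTop (by positivity) hdist.inv_tendsto_nhdsGT_zero).congr' ?_
  have hne : ∀ᶠ p : E × E in 𝓝[{p | p.2 ≠ p.1}] (c, c), p.1 ≠ 0 :=
    nhdsWithin_le_nhds ((continuous_fst.tendsto (c, c)).eventually_ne hc)
  filter_upwards [self_mem_nhdsWithin, hne] with p hp hp0
  rw [norm_inversion_norm hp0 hp, Pi.inv_apply, div_mul_eq_mul_div, div_eq_mul_inv]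

/-- Near the pole the Kelvin transform sees the growth of `g` at infinity. -/
lemma tendsto_kelvinDiff_atTop (hg : Continuous g)
    (hgrowth : Tendsto (fun x => ‖x‖ ^ ((finrank ℝ E : ℝ) - α) * g x)
      (comap (fun x : E => ‖x‖) atTop) atTop) (hc : c ≠ 0) :
    Tendsto (fun p : E × E => kelvinDiff α g p.1 p.2) (𝓝[{p | p.2 ≠ p.1}] (c, c)) atTop := by
  have hcpos : 0 < ‖c‖ := norm_pos_iff.2 hc
  have hsnd : Tendsto (fun p : E × E => p.2) (𝓝[{p | p.2 ≠ p.1}] (c, c)) (𝓝 c) :=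
    (continuous_snd.tendsto (c, c)).mono_left nhdsWithin_le_nhds
  have hfst : Tendsto (fun p : E × E => p.1) (𝓝[{p | p.2 ≠ p.1}] (c, c)) (𝓝 c) :=
    (continuous_fst.tendsto (c, c)).mono_left nhdsWithin_le_nhds
  have hfactor : Tendsto (fun p : E × E => (‖p.2‖ ^ ((finrank ℝ E : ℝ) - α))⁻¹)
      (𝓝[{p | p.2 ≠ p.1}] (c, c)) (𝓝 (‖c‖ ^ ((finrank ℝ E : ℝ) - α))⁻¹) :=
    (hsnd.norm.rpow_const (Or.inl hcpos.ne')).inv₀ (by positivity)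
  have hinversion := tendsto_comap_iff.2 (tendsto_norm_inversion_atTop hc)
  have hkelvin := (hgrowth.comp hinversion).atTop_mul_pos (by positivity) hfactor
  refine (hkelvin.atTop_add ((hg.tendsto c).comp hsnd).neg).congr' ?_
  filter_upwards [self_mem_nhdsWithin, hfst.eventually_ne hc, hsnd.eventually_ne hc]
    with p hp hp1 hp2
  rw [kelvinDiff, kelvinTransform_norm α g hp1 hp hp2]
  rfl

lemma eventually_kelvinDiff_pos (hg : Continuous g)
    (hgrowth : Tendsto (fun x => ‖x‖ ^ ((finrank ℝ E : ℝ) - α) * g x)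
      (comap (fun x : E => ‖x‖) atTop) atTop) (hc : c ≠ 0) :
    ∀ᶠ y in 𝓝[≠] c, 0 < kelvinDiff α g c y := by
  have hpair : Tendsto (fun y => (c, y)) (𝓝[≠] c) (𝓝[{p : E × E | p.2 ≠ p.1}] (c, c)) :=
    tendsto_nhdsWithin_iff.2 ⟨((Continuous.prodMk_right c).tendsto c).mono_left
      nhdsWithin_le_nhds, self_mem_nhdsWithin⟩
  exact hpair.eventually ((tendsto_kelvinDiff_atTop hg hgrowth hc).eventually_gt_atTop 0)

lemma exists_isMinOn_kelvinDiff [ProperSpace E] (hg : Continuous g)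
    (hgrowth : Tendsto (fun x => ‖x‖ ^ ((finrank ℝ E : ℝ) - α) * g x)
      (comap (fun x : E => ‖x‖) atTop) atTop) (hc : c ≠ 0)
    (hneg : ¬IsKelvinDominated α g c) :
    ∃ x ∈ ball c ‖c‖ \ {c}, kelvinDiff α g c x < 0 ∧
      IsMinOn (kelvinDiff α g c) (ball c ‖c‖ \ {c}) x := by
  unfold IsKelvinDominated at hneg
  push Not at hneg
  obtain ⟨z, hz, hwz⟩ := hneg
  obtain ⟨η, hη, hpos⟩ := Metric.eventually_nhds_iff_ball.1
    (eventually_nhdsWithin_iff.1 (eventually_kelvinDiff_pos hg hgrowth hc))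
  have hne : ∀ y ∈ closedBall c ‖c‖ \ ball c η, y ≠ c := by
    rintro y hy rfl
    exact hy.2 (mem_ball_self hη)
  have hcont : ContinuousOn (kelvinDiff α g c) (closedBall c ‖c‖ \ ball c η) := fun y hy =>
    ((continuousAt_kelvinDiff α hg hc (hne y hy)).comp
      (Continuous.prodMk_right c).continuousAt).continuousWithinAt
  have hzK : z ∈ closedBall c ‖c‖ \ ball c η :=
    ⟨ball_subset_closedBall hz.1, fun h => hwz.not_gt (hpos z h hz.2)⟩
  obtain ⟨x, hx, hmin⟩ :=
    ((isCompact_closedBall c ‖c‖).diff isOpen_ball).exists_isMinOn ⟨z, hzK⟩ hcont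
  have hwx : kelvinDiff α g c x < 0 := (hmin hzK).trans_lt hwz
  have hsphere : x ∉ sphere c ‖c‖ := fun h => hwx.ne <|
    (isKelvinAnti_kelvinDiff α g hc).eq_zero_of_mem_sphere (norm_ne_zero_iff.2 hc) h
  refine ⟨x, ⟨lt_of_le_of_ne hx.1 hsphere, hne x hx⟩, hwx, fun y hy => ?_⟩
  by_cases hyη : y ∈ ball c η
  · exact (hwx.trans (hpos y hyη hy.2)).le
  · exact hmin ⟨ball_subset_closedBall hy.1, hyη⟩

variable [FiniteDimensional ℝ E] [Nontrivial E] [MeasurableSpace E] [BorelSpace E]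

lemma FracIntegrableAt.kelvinDiff (hc : c ≠ 0) (hx : x ≠ c)
    (hg : FracIntegrableAt α g x) (hg' : FracIntegrableAt α g (inversion c ‖c‖ x)) :
    FracIntegrableAt α (kelvinDiff α g c) x :=
  (hg'.kelvinTransform (norm_pos_iff.2 hc) hx).sub hg

lemma HasFracLapAt.kelvinDiff (hα : α ∈ Ioo (0 : ℝ) 2) (hc : c ≠ 0) (hx : x ≠ c)
    (hL : HasFracLapAt α g (inversion c ‖c‖ x) L) (hL' : HasFracLapAt α g x L')
    (hdiff : DifferentiableAt ℝ g (inversion c ‖c‖ x)) (hg : FracIntegrableAt α g x)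
    (hg' : FracIntegrableAt α g (inversion c ‖c‖ x)) :
    HasFracLapAt α (kelvinDiff α g c) x
      ((‖c‖ / dist x c) ^ ((finrank ℝ E : ℝ) + α) * L - L') :=
  (hL.kelvinTransform hα (norm_pos_iff.2 hc) hx hdiff hg').sub hα.1 hL'
    (hg'.kelvinTransform (norm_pos_iff.2 hc) hx) hg

end KelvinDiff

/-! ### Components of the Hénon system -/

section HenonComponent

lemma rpow_tangent_le {q a b : ℝ} (hq : 1 ≤ q) (ha : 0 ≤ a) (hb : 0 < b) :
    q * b ^ (q - 1) * (a - b) ≤ a ^ q - b ^ q := by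
  have hbernoulli := one_add_mul_self_le_rpow_one_add (s := a / b - 1)
    (by linarith [div_nonneg ha hb.le]) hq
  rw [add_sub_cancel, Real.div_rpow ha hb.le, le_div_iff₀ (by positivity)] at hbernoulli
  calc q * b ^ (q - 1) * (a - b) = (1 + q * (a / b - 1)) * b ^ q - b ^ q := by
        rw [Real.rpow_sub_one hb.ne']
        field_simp
        ring
    _ ≤ a ^ q - b ^ q := sub_le_sub_right hbernoulli _

variable {E : Type*} [NormedAddCommGroup E] [InnerProductSpace ℝ E]

lemma exists_closedBall_subset_compl_ball {c x : E} {ρ : ℝ} (hx : x ∈ ball c ρ \ {c}) :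
    ∃ p, closedBall p (ρ - dist x c) ⊆ (ball c ρ)ᶜ ∩ closedBall x (3 * (ρ - dist x c)) := by
  have hxc := dist_pos.2 hx.2
  have hgap : 0 < ρ - dist x c := sub_pos.2 hx.1
  have hscale : 0 ≤ 2 * (ρ - dist x c) / dist x c := by positivity
  refine ⟨x + (2 * (ρ - dist x c) / dist x c) • (x - c), fun y hy => ?_⟩
  set p := x + (2 * (ρ - dist x c) / dist x c) • (x - c) with hp
  have hpx : dist p x = 2 * (ρ - dist x c) := by
    rw [dist_eq_norm, hp, add_sub_cancel_left, norm_smul_of_nonneg hscale, ← dist_eq_norm,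
      div_mul_cancel₀ _ hxc.ne']
  have hpc : dist p c = dist x c + 2 * (ρ - dist x c) := by
    rw [dist_eq_norm, hp, show x + (2 * (ρ - dist x c) / dist x c) • (x - c) - c
      = (1 + 2 * (ρ - dist x c) / dist x c) • (x - c) by module,
      norm_smul_of_nonneg (by positivity), ← dist_eq_norm, add_mul, one_mul,
      div_mul_cancel₀ _ hxc.ne']
  rw [mem_closedBall] at hy
  refine ⟨?_, ?_⟩
  · rw [mem_compl_iff, mem_ball, not_lt]
    linarith [dist_triangle_left p c y]
  · rw [mem_closedBall]
    linarith [dist_triangle y p x]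

variable [FiniteDimensional ℝ E] [MeasurableSpace E] [BorelSpace E]

lemma le_setIntegral_compl_ball_fracKernel {α ρ : ℝ} (hα : 0 < α) {c x : E}
    (hx : x ∈ ball c ρ \ {c}) :
    volume.real (ball (0 : E) 1) / 3 ^ ((finrank ℝ E : ℝ) + α) / (ρ - dist x c) ^ α
      ≤ ∫ y in (ball c ρ)ᶜ, fracKernel α x y := by
  have hgap : 0 < ρ - dist x c := sub_pos.2 hx.1
  obtain ⟨p, hp⟩ := exists_closedBall_subset_compl_ball hx
  have hsub : closedBall p (ρ - dist x c) ⊆ (ball c ρ)ᶜ := fun y hy => (hp hy).1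
  have hint : IntegrableOn (fracKernel α x) (ball c ρ)ᶜ := by
    simpa only [one_mul] using (fracIntegrableAt_const hα 1 x _ hgap).mono_set
      (compl_subset_compl.2 (ball_subset_ball' (sub_add_cancel ρ (dist x c)).le))
  have hbound : ∀ y ∈ closedBall p (ρ - dist x c),
      ((3 * (ρ - dist x c)) ^ ((finrank ℝ E : ℝ) + α))⁻¹ ≤ fracKernel α x y := fun y hy => by
    have hxy : 0 < dist x y := dist_pos.2 fun h => (hp hy).1 (h ▸ hx.1)
    exact inv_anti₀ (by positivity)
      (Real.rpow_le_rpow hxy.le (mem_closedBall'.1 (hp hy).2) (by positivity))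
  calc volume.real (ball (0 : E) 1) / 3 ^ ((finrank ℝ E : ℝ) + α) / (ρ - dist x c) ^ α
      = ∫ _ in closedBall p (ρ - dist x c), ((3 * (ρ - dist x c)) ^ ((finrank ℝ E : ℝ) + α))⁻¹ := by
        rw [setIntegral_const, Measure.addHaar_real_closedBall volume p hgap.le, smul_eq_mul,
          Real.mul_rpow (by norm_num) hgap.le, Real.rpow_add hgap, Real.rpow_natCast]
        field_simp
    _ ≤ ∫ y in closedBall p (ρ - dist x c), fracKernel α x y :=
        setIntegral_mono_on (integrableOn_const measure_closedBall_lt_top.ne) (hint.mono_set hsub)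
          measurableSet_closedBall hbound
    _ ≤ ∫ y in (ball c ρ)ᶜ, fracKernel α x y :=
        setIntegral_mono_set hint (Eventually.of_forall (fracKernel_nonneg α x))
          hsub.eventuallyLE

/-- One half of the fractional Hénon system: `u` solves
`(−Δ)^{α/2} u = κ |x|^{(d−α)q−(d+α)} v^q` with `v > 0`, where `d = dim E` and `κ` absorbs the
normalizing constant of the fractional Laplacian, and `|x|^{d−α} u → ∞`. The full system is
`IsHenonComponent α κ q u v ∧ IsHenonComponent α κ r v u`. -/
structure IsHenonComponent (α κ q : ℝ) (u v : E → ℝ) : Prop where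
  mem_Ioo : α ∈ Ioo (0 : ℝ) 2
  lt_finrank : α < finrank ℝ E
  const_pos : 0 < κ
  le_exponent : ((finrank ℝ E : ℝ) + α) / ((finrank ℝ E : ℝ) - α) ≤ q
  rhs_pos : ∀ x, 0 < v x
  differentiable : Differentiable ℝ u
  rhs_continuous : Continuous v
  fracIntegrableAt : ∀ x, FracIntegrableAt α u x
  hasFracLapAt : ∀ x, HasFracLapAt α u x
    (κ * (‖x‖ ^ (((finrank ℝ E : ℝ) - α) * q - ((finrank ℝ E : ℝ) + α)) * v x ^ q))
  growth : Tendsto (fun x => ‖x‖ ^ ((finrank ℝ E : ℝ) - α) * u x)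
    (comap (fun x : E => ‖x‖) atTop) atTop

namespace IsHenonComponent

variable {α κ q : ℝ} {u v : E → ℝ} {c x : E}

lemma one_le_exponent (H : IsHenonComponent α κ q u v) : 1 ≤ q := by
  have hα := H.mem_Ioo.1
  exact ((one_le_div (sub_pos.2 H.lt_finrank)).2 (by linarith)).trans H.le_exponent

lemma weight_nonneg (H : IsHenonComponent α κ q u v) :
    0 ≤ ((finrank ℝ E : ℝ) - α) * q - ((finrank ℝ E : ℝ) + α) := by
  have hq := H.le_exponent
  rw [div_le_iff₀ (sub_pos.2 H.lt_finrank)] at hq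
  linarith

lemma exists_weight_le (H : IsHenonComponent α κ q u v) (R : ℝ) :
    ∃ A > 0, ∀ x ∈ closedBall (0 : E) R,
      κ * (‖x‖ ^ (((finrank ℝ E : ℝ) - α) * q - ((finrank ℝ E : ℝ) + α)) *
        (q * v x ^ (q - 1))) ≤ A := by
  have hcont : Continuous fun x : E =>
      κ * (‖x‖ ^ (((finrank ℝ E : ℝ) - α) * q - ((finrank ℝ E : ℝ) + α)) *
        (q * v x ^ (q - 1))) :=
    continuous_const.mul ((continuous_norm.rpow_const fun _ => Or.inr H.weight_nonneg).mul
      (continuous_const.mul (H.rhs_continuous.rpow_const fun x => Or.inl (H.rhs_pos x).ne')))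
  obtain ⟨A, hA, hbound⟩ :=
    ((isCompact_closedBall (0 : E) R).bddAbove_image hcont.continuousOn).exists_ge 1
  exact ⟨A, one_pos.trans_le hA, fun x hx => hbound _ (mem_image_of_mem _ hx)⟩

lemma fracIntegrableAt_kelvinDiff [Nontrivial E] (H : IsHenonComponent α κ q u v) (hc : c ≠ 0)
    (hx : x ≠ c) : FracIntegrableAt α (kelvinDiff α u c) x :=
  (H.fracIntegrableAt x).kelvinDiff hc hx (H.fracIntegrableAt _)

/-- The weight `|x|^{(d−α)q−(d+α)}` is the one for which spheres through the origin preserve the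
equation. -/
lemma hasFracLapAt_kelvinDiff [Nontrivial E] (H : IsHenonComponent α κ q u v) (hc : c ≠ 0)
    (hx : x ≠ c) :
    HasFracLapAt α (kelvinDiff α u c) x
      (κ * (‖x‖ ^ (((finrank ℝ E : ℝ) - α) * q - ((finrank ℝ E : ℝ) + α)) *
        (kelvinTransform α c ‖c‖ v x ^ q - v x ^ q))) := by
  have hlap := (H.hasFracLapAt (inversion c ‖c‖ x)).kelvinDiff H.mem_Ioo hc hx (H.hasFracLapAt x)
    (H.differentiable _) (H.fracIntegrableAt x) (H.fracIntegrableAt _)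
  have hratio : 0 < ‖c‖ / dist x c := div_pos (norm_pos_iff.2 hc) (dist_pos.2 hx)
  have hv := H.rhs_pos (inversion c ‖c‖ x)
  convert hlap using 1
  rw [norm_inversion_norm hc hx, kelvinTransform, Real.mul_rpow hratio.le (norm_nonneg _),
    Real.mul_rpow (by positivity) hv.le, ← Real.rpow_mul hratio.le, Real.rpow_sub hratio]
  field_simp

end IsHenonComponent

end HenonComponent

/-! ### The method of moving spheres -/

section KelvinDominated

variable {E : Type*} [NormedAddCommGroup E] [InnerProductSpace ℝ E] {α : ℝ} {g : E → ℝ}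
  {c x y z : E}

lemma IsKelvinDominated.of_mem_closure (hg : Continuous g) (hc : c ≠ 0)
    (hmem : c ∈ closure {c' | IsKelvinDominated α g c'}) : IsKelvinDominated α g c := by
  intro y hy
  have hcont : ContinuousAt (fun c' => kelvinDiff α g c' y) c := by
    have hjoint := continuousAt_kelvinDiff α hg hc hy.2
    exact hjoint.comp₂ continuousAt_id continuousAt_const
  have hlt : ∀ᶠ c' in 𝓝 c, dist y c' < ‖c'‖ :=
    (by fun_prop : Continuous fun c' => dist y c').continuousAt.eventually_lt
      continuous_norm.continuousAt hy.1
  have hne : ∀ᶠ c' in 𝓝 c, c' ≠ y := continuousAt_id.eventually_ne (Ne.symm hy.2)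
  have hfreq : ∃ᶠ c' in 𝓝 c, 0 ≤ kelvinDiff α g c' y :=
    ((mem_closure_iff_frequently.1 hmem).and_eventually (hlt.and hne)).mono
      fun c' ⟨hdom, hball, hyc⟩ => hdom y ⟨hball, hyc.symm⟩
  exact ge_of_tendsto_of_frequently hcont.tendsto hfreq

lemma eventually_mem_ball_smul_atTop (hxz : 0 < inner ℝ x z) :
    ∀ᶠ t : ℝ in atTop, x ∈ ball (t • z) ‖t • z‖ \ {t • z} := by
  filter_upwards [eventually_gt_atTop (‖x‖ ^ 2 / inner ℝ x z)] with t ht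
  rw [div_lt_iff₀ hxz, ← real_inner_smul_right] at ht
  refine ⟨?_, ?_⟩
  · rw [mem_ball, dist_eq_norm]
    refine lt_of_pow_lt_pow_left₀ 2 (norm_nonneg _) ?_
    rw [norm_sub_sq_real]
    nlinarith [sq_nonneg ‖x‖]
  · intro h
    rw [← mem_singleton_iff.1 h, real_inner_self_eq_norm_sq] at ht
    exact ht.false

/-- Spheres through the origin with centres escaping in the direction `x - y` converge to the
hyperplane reflecting `x` to `y`. -/
lemma le_of_forall_isKelvinDominated (hg : Continuous g)
    (hdom : ∀ c ≠ 0, IsKelvinDominated α g c) (hxy : ‖x‖ = ‖y‖) : g x ≤ g y := by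
  rcases eq_or_ne x y with rfl | hne
  · rfl
  have hz : x - y ≠ 0 := sub_ne_zero.2 hne
  have hinner : 0 < inner ℝ x (x - y) := by
    have hsq := norm_sub_sq_real x y
    rw [← hxy] at hsq
    rw [inner_sub_right, real_inner_self_eq_norm_sq]
    linarith [pow_pos (norm_pos_iff.2 hz) 2]
  have hkelvin : Tendsto (fun t : ℝ => kelvinTransform α (t • (x - y)) ‖t • (x - y)‖ g x) atTop
      (𝓝 (g y)) := by
    have hfactor := (tendsto_norm_div_dist_smul_atTop hz x).rpow_const
      (p := (finrank ℝ E : ℝ) - α) (Or.inl one_ne_zero)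
    have hlim := hfactor.mul ((hg.tendsto _).comp (tendsto_inversion_smul_atTop hz x))
    rwa [Real.one_rpow, one_mul, Submodule.reflection_sub hxy] at hlim
  refine ge_of_tendsto hkelvin ?_
  filter_upwards [eventually_mem_ball_smul_atTop hinner, eventually_ne_atTop 0] with t hx ht
  exact sub_nonneg.1 (hdom _ (smul_ne_zero ht hz) x hx)

end KelvinDominated

section Domination

namespace IsHenonComponent

variable {E : Type*} [NormedAddCommGroup E] [InnerProductSpace ℝ E] [FiniteDimensional ℝ E]
  [Nontrivial E] [MeasurableSpace E] [BorelSpace E] {α κ κ' q r : ℝ} {u v : E → ℝ} {c x : E}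

lemma weight_mul_kelvinDiff_le (H : IsHenonComponent α κ q u v) (hc : c ≠ 0)
    (hx : x ∈ ball c ‖c‖ \ {c}) (hmin : IsMinOn (kelvinDiff α u c) (ball c ‖c‖ \ {c}) x)
    (hneg : kelvinDiff α u c x ≤ 0) :
    κ * (‖x‖ ^ (((finrank ℝ E : ℝ) - α) * q - ((finrank ℝ E : ℝ) + α)) * (q * v x ^ (q - 1))) *
        kelvinDiff α v c x
      ≤ volume.real (ball (0 : E) 1) / 3 ^ ((finrank ℝ E : ℝ) + α) / (‖c‖ - dist x c) ^ α *
        kelvinDiff α u c x := by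
  have hα := H.mem_Ioo.1
  have hκ := H.const_pos
  have hinv : inversion c ‖c‖ x ≠ c :=
    (inversion_eq_center (norm_ne_zero_iff.2 hc)).not.2 hx.2
  have hle := (H.hasFracLapAt_kelvinDiff hc hx.2).le_of_isMinOn hα hx
    (isKelvinAnti_kelvinDiff α u hc) (H.fracIntegrableAt_kelvinDiff hc hx.2)
    (H.fracIntegrableAt_kelvinDiff hc hinv) hmin hneg one_pos (empty_subset _)
  rw [setIntegral_empty, add_zero] at hle
  have hkelvin : 0 ≤ kelvinTransform α c ‖c‖ v x :=
    mul_nonneg (by positivity) (H.rhs_pos _).le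
  calc κ * (‖x‖ ^ (((finrank ℝ E : ℝ) - α) * q - ((finrank ℝ E : ℝ) + α)) *
          (q * v x ^ (q - 1))) * kelvinDiff α v c x
      = κ * (‖x‖ ^ (((finrank ℝ E : ℝ) - α) * q - ((finrank ℝ E : ℝ) + α)) *
          (q * v x ^ (q - 1) * (kelvinTransform α c ‖c‖ v x - v x))) := by
        rw [kelvinDiff]
        ring
    _ ≤ κ * (‖x‖ ^ (((finrank ℝ E : ℝ) - α) * q - ((finrank ℝ E : ℝ) + α)) *
          (kelvinTransform α c ‖c‖ v x ^ q - v x ^ q)) := by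
        gcongr
        exact rpow_tangent_le H.one_le_exponent hkelvin (H.rhs_pos x)
    _ ≤ kelvinDiff α u c x * ∫ y in (ball c ‖c‖)ᶜ, fracKernel α x y := hle
    _ ≤ volume.real (ball (0 : E) 1) / 3 ^ ((finrank ℝ E : ℝ) + α) / (‖c‖ - dist x c) ^ α *
          kelvinDiff α u c x := by
        rw [mul_comm]
        exact mul_le_mul_of_nonpos_right (le_setIntegral_compl_ball_fracKernel hα hx) hneg

/-- If `u` is not dominated, the equation at the minimum transfers the negativity to `v`, with a
constant that degenerates at the sphere. -/
lemma exists_isMinOn_le_mul (H : IsHenonComponent α κ q u v) (R : ℝ) :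
    ∃ A > 0, ∀ c : E, c ≠ 0 → ‖c‖ ≤ R → ¬IsKelvinDominated α u c →
      ∃ x ∈ ball c ‖c‖ \ {c}, IsMinOn (kelvinDiff α u c) (ball c ‖c‖ \ {c}) x ∧
        kelvinDiff α u c x < 0 ∧ kelvinDiff α v c x < 0 ∧
        -kelvinDiff α u c x ≤ A * (‖c‖ - dist x c) ^ α * -kelvinDiff α v c x := by
  obtain ⟨A, hA, hweight⟩ := H.exists_weight_le (2 * R)
  have hK : 0 < volume.real (ball (0 : E) 1) / 3 ^ ((finrank ℝ E : ℝ) + α) :=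
    div_pos (ENNReal.toReal_pos (measure_ball_pos _ _ one_pos).ne' measure_ball_lt_top.ne)
      (by positivity)
  set K := volume.real (ball (0 : E) 1) / 3 ^ ((finrank ℝ E : ℝ) + α) with hK_def
  refine ⟨A / K, div_pos hA hK, fun c hc hcR hdom => ?_⟩
  obtain ⟨x, hx, hwu, hmin⟩ :=
    exists_isMinOn_kelvinDiff H.differentiable.continuous H.growth hc hdom
  have hle := H.weight_mul_kelvinDiff_le hc hx hmin hwu.le
  rw [← hK_def] at hle
  have hgap : 0 < ‖c‖ - dist x c := sub_pos.2 hx.1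
  have hxR : x ∈ closedBall (0 : E) (2 * R) := by
    have htriangle := dist_triangle x c 0
    rw [dist_zero_right c] at htriangle
    rw [mem_closedBall]
    linarith [mem_ball.1 hx.1]
  set a := κ * (‖x‖ ^ (((finrank ℝ E : ℝ) - α) * q - ((finrank ℝ E : ℝ) + α)) *
    (q * v x ^ (q - 1)))
  have ha : 0 ≤ a := by
    have := H.const_pos
    have := H.rhs_pos x
    have := H.one_le_exponent
    positivity
  have hwv : kelvinDiff α v c x < 0 := by
    have hlt := hle.trans_lt (mul_neg_of_pos_of_neg (by positivity) hwu)
    exact neg_of_mul_neg_right hlt ha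
  refine ⟨x, hx, hmin, hwu, hwv, ?_⟩
  have hAle := mul_le_mul_of_nonpos_right (hweight x hxR) hwv.le
  have hscaled := mul_le_mul_of_nonneg_right (hAle.trans hle)
    (show 0 ≤ (‖c‖ - dist x c) ^ α / K by positivity)
  have hright : K / (‖c‖ - dist x c) ^ α * kelvinDiff α u c x * ((‖c‖ - dist x c) ^ α / K)
      = kelvinDiff α u c x := by field_simp
  rw [hright] at hscaled
  linear_combination hscaled

lemma isKelvinDominated_swap (H : IsHenonComponent α κ q u v) (hc : c ≠ 0)
    (hv : IsKelvinDominated α v c) : IsKelvinDominated α u c := by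
  by_contra hu
  obtain ⟨A, -, hA⟩ := H.exists_isMinOn_le_mul ‖c‖
  obtain ⟨x, hx, -, -, hneg, -⟩ := hA c hc le_rfl hu
  exact hneg.not_ge (hv x hx)

/-- The minima of the two differences bound each other with constants whose product tends to zero
at the sphere, so negativity cannot be confined to a thin shell. -/
lemma exists_margin (H : IsHenonComponent α κ q u v) (H' : IsHenonComponent α κ' r v u) {R : ℝ}
    (hR : 0 < R) :
    ∃ δ > 0, ∀ c : E, c ≠ 0 → ‖c‖ ≤ R →
      (∀ x ∈ ball c ‖c‖ \ {c}, dist x c ≤ ‖c‖ - δ → 0 ≤ kelvinDiff α u c x) →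
      IsKelvinDominated α u c := by
  have hα := H.mem_Ioo.1
  obtain ⟨A, hA, hu⟩ := H.exists_isMinOn_le_mul R
  obtain ⟨B, hB, hv⟩ := H'.exists_isMinOn_le_mul R
  refine ⟨((A * B * R ^ α)⁻¹) ^ α⁻¹, by positivity, fun c hc hcR hcore => ?_⟩
  by_contra hdom
  obtain ⟨x, hx, hminu, hux, hvx, hle⟩ := hu c hc hcR hdom
  obtain ⟨y, hy, hminv, -, huy, hle'⟩ := hv c hc hcR fun h => hvx.not_ge (h x hx)
  have hs : 0 < ‖c‖ - dist x c := sub_pos.2 hx.1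
  have ht : 0 < ‖c‖ - dist y c := sub_pos.2 hy.1
  have hshell : (‖c‖ - dist x c) ^ α < (A * B * R ^ α)⁻¹ := by
    rw [← Real.lt_rpow_inv_iff_of_pos hs.le (by positivity) hα]
    by_contra! hfar
    exact hux.not_ge (hcore x hx (by linarith))
  have htR : (‖c‖ - dist y c) ^ α ≤ R ^ α :=
    Real.rpow_le_rpow ht.le (by linarith [dist_nonneg (x := y) (y := c)]) hα.le
  refine lt_irrefl (-kelvinDiff α u c x) ?_
  calc -kelvinDiff α u c x
      ≤ A * (‖c‖ - dist x c) ^ α * -kelvinDiff α v c y :=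
        hle.trans (mul_le_mul_of_nonneg_left (neg_le_neg (hminv hx)) (by positivity))
    _ ≤ A * (‖c‖ - dist x c) ^ α * (B * R ^ α * -kelvinDiff α u c x) := by
        have := neg_pos.2 huy
        gcongr
        refine hle'.trans ?_
        gcongr
        exact hminu hy
    _ = A * B * R ^ α * (‖c‖ - dist x c) ^ α * -kelvinDiff α u c x := by ring
    _ < A * B * R ^ α * (A * B * R ^ α)⁻¹ * -kelvinDiff α u c x := by
        have := neg_pos.2 hux
        gcongr
    _ = -kelvinDiff α u c x := by
        rw [mul_inv_cancel₀ (by positivity), one_mul]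

lemma kelvinDiff_pos (H : IsHenonComponent α κ q u v) (hc : c ≠ 0)
    (hu : IsKelvinDominated α u c) (hv : IsKelvinDominated α v c) (hx : x ∈ ball c ‖c‖ \ {c}) :
    0 < kelvinDiff α u c x := by
  have hinv : inversion c ‖c‖ x ≠ c := (inversion_eq_center (norm_ne_zero_iff.2 hc)).not.2 hx.2
  have hball : ∀ᶠ y in 𝓝[≠] c, y ∈ ball c ‖c‖ :=
    nhdsWithin_le_nhds (ball_mem_nhds c (norm_pos_iff.2 hc))
  obtain ⟨z, hzpos, hzball, hzc⟩ :=
    ((eventually_kelvinDiff_pos H.differentiable.continuous H.growth hc).and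
      (hball.and self_mem_nhdsWithin)).exists
  have hcont : ContinuousAt (kelvinDiff α u c) z :=
    (continuousAt_kelvinDiff α H.differentiable.continuous hc hzc).comp
      (Continuous.prodMk_right c).continuousAt
  refine (H.hasFracLapAt_kelvinDiff hc hx.2).pos_of_nonneg H.mem_Ioo.1 hx
    (isKelvinAnti_kelvinDiff α u hc) (H.fracIntegrableAt_kelvinDiff hc hx.2)
    (H.fracIntegrableAt_kelvinDiff hc hinv) hu ?_ hzball hcont hzpos
  have hκ := H.const_pos
  have hle : v x ^ q ≤ kelvinTransform α c ‖c‖ v x ^ q :=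
    Real.rpow_le_rpow (H.rhs_pos x).le (sub_nonneg.1 (hv x hx))
      (zero_le_one.trans H.one_le_exponent)
  exact mul_nonneg hκ.le (mul_nonneg (by positivity) (sub_nonneg.2 hle))

lemma eventually_isKelvinDominated (H : IsHenonComponent α κ q u v)
    (H' : IsHenonComponent α κ' r v u) (hc : c ≠ 0) (hu : IsKelvinDominated α u c)
    (hv : IsKelvinDominated α v c) : ∀ᶠ c' in 𝓝 c, IsKelvinDominated α u c' := by
  obtain ⟨δ, hδ, hmargin⟩ := H.exists_margin H' (R := ‖c‖ + 1) (by positivity)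
  have hcore : ∀ᶠ c' in 𝓝 c, ∀ x ∈ closedBall c (‖c‖ - δ / 2), x ≠ c' →
      0 < kelvinDiff α u c' x := by
    refine (isCompact_closedBall c _).eventually_forall_of_forall_eventually fun x hx => ?_
    rcases eq_or_ne x c with rfl | hxc
    · exact eventually_nhdsWithin_iff.1 ((tendsto_kelvinDiff_atTop H.differentiable.continuous
        H.growth hc).eventually_gt_atTop 0)
    · have hxball : x ∈ ball c ‖c‖ \ {c} := ⟨(mem_closedBall.1 hx).trans_lt (by linarith), hxc⟩
      exact ((continuousAt_kelvinDiff α H.differentiable.continuous hc hxc).eventually_const_lt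
        (H.kelvinDiff_pos hc hu hv hxball)).mono fun p hp _ => hp
  have hnear : ∀ᶠ c' in 𝓝 c, dist c' c < min 1 (δ / 4) :=
    ball_mem_nhds c (by positivity)
  filter_upwards [hcore, hnear, continuousAt_id.eventually_ne hc] with c' hpos hdist hc'
  have hnorm : ‖c'‖ ≤ ‖c‖ + dist c' c := by
    simpa only [dist_zero_right, add_comm] using dist_triangle c' c 0
  have hlt_one := hdist.trans_le (min_le_left _ _)
  have hlt_delta := hdist.trans_le (min_le_right _ _)
  refine hmargin c' hc' (by linarith) fun x hx hxδ => (hpos x ?_ hx.2).le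
  rw [mem_closedBall]
  linarith [dist_triangle x c' c]

lemma exists_isKelvinDominated_of_norm_lt (H : IsHenonComponent α κ q u v)
    (H' : IsHenonComponent α κ' r v u) :
    ∃ δ > 0, ∀ c : E, c ≠ 0 → ‖c‖ < δ → IsKelvinDominated α u c := by
  obtain ⟨δ, hδ, hmargin⟩ := H.exists_margin H' one_pos
  refine ⟨min 1 δ, by positivity, fun c hc hlt => hmargin c hc ?_ fun x _ hx => ?_⟩
  · exact (hlt.trans_le (min_le_left _ _)).le
  · linarith [hlt.trans_le (min_le_right _ _), dist_nonneg (x := x) (y := c)]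

/-- The centres of dominated spheres form a nonempty, open and relatively closed subset of every ray
from the origin. -/
lemma isKelvinDominated (H : IsHenonComponent α κ q u v) (H' : IsHenonComponent α κ' r v u)
    (hc : c ≠ 0) : IsKelvinDominated α u c := by
  set U : Set E := {c' | c' ≠ 0 ∧ IsKelvinDominated α u c' ∧ IsKelvinDominated α v c'}
  have hopen : IsOpen U := isOpen_iff_mem_nhds.2 fun c' ⟨hc', hu, hv⟩ =>
    (continuousAt_id.eventually_ne hc').and <|
      (H.eventually_isKelvinDominated H' hc' hu hv).and
        (H'.eventually_isKelvinDominated H hc' hv hu)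
  have hray : IsPreconnected ((fun t : ℝ => t • c) '' Ioi 0) :=
    isPreconnected_Ioi.image _ (by fun_prop)
  have hmeets : ((fun t : ℝ => t • c) '' Ioi 0 ∩ U).Nonempty := by
    obtain ⟨δ, hδ, hsmall⟩ := H.exists_isKelvinDominated_of_norm_lt H'
    have hcpos : 0 < ‖c‖ := norm_pos_iff.2 hc
    have hne : (δ / (2 * ‖c‖)) • c ≠ 0 := smul_ne_zero (by positivity) hc
    have hdom : IsKelvinDominated α u ((δ / (2 * ‖c‖)) • c) := by
      refine hsmall _ hne ?_
      rw [norm_smul, Real.norm_of_nonneg (by positivity), div_mul_eq_mul_div,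
        mul_div_mul_right _ _ hcpos.ne']
      exact half_lt_self hδ
    exact ⟨_, ⟨_, div_pos hδ (by positivity), rfl⟩, hne, hdom, H'.isKelvinDominated_swap hne hdom⟩
  have hclosed : closure U ∩ (fun t : ℝ => t • c) '' Ioi 0 ⊆ U := by
    rintro _ ⟨hmem, t, ht, rfl⟩
    have hne : t • c ≠ 0 := smul_ne_zero (ne_of_gt ht) hc
    exact ⟨hne,
      .of_mem_closure H.differentiable.continuous hne (closure_mono (fun _ h => h.2.1) hmem),
      .of_mem_closure H'.differentiable.continuous hne (closure_mono (fun _ h => h.2.2) hmem)⟩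
  have hcU : c ∈ U := hray.subset_of_closure_inter_subset hopen hmeets hclosed
    ⟨1, mem_Ioi.2 one_pos, one_smul ℝ c⟩
  exact hcU.2.1

lemma eq_of_norm_eq (H : IsHenonComponent α κ q u v) (H' : IsHenonComponent α κ' r v u) {y : E}
    (hxy : ‖x‖ = ‖y‖) : u x = u y :=
  have hdom : ∀ c ≠ 0, IsKelvinDominated α u c := fun _ hc => H.isKelvinDominated H' hc
  have hu : Continuous u := H.differentiable.continuous
  le_antisymm (le_of_forall_isKelvinDominated hu hdom hxy)
    (le_of_forall_isKelvinDominated hu hdom hxy.symm)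

end IsHenonComponent

end Domination

/-! ### The Hénon system on Euclidean space -/

lemma hasFracLapAt_of_isFracLap {n : ℕ} {α C : ℝ} (hC : C ≠ 0)
    {u F : EuclideanSpace ℝ (Fin n) → ℝ} (h : IsFracLap n α C u F)
    (x : EuclideanSpace ℝ (Fin n)) : HasFracLapAt α u x (C⁻¹ * F x) := by
  refine ((h x).const_mul C⁻¹).congr fun ε => ?_
  have hset : {y | ε ≤ dist x y} = (ball x ε)ᶜ := by
    ext y
    rw [mem_ofPred_eq, mem_compl_iff, mem_ball', not_lt]
  rw [inv_mul_cancel_left₀ hC, hset]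
  simp only [fracKernel, finrank_euclideanSpace_fin, div_eq_mul_inv]

lemma isHenonComponent_of_isFracLap {n : ℕ} {α C q : ℝ}
    {u v : EuclideanSpace ℝ (Fin n) → ℝ} (hα : α ∈ Ioo (0 : ℝ) 2) (hnα : α < (n : ℝ)) (hC : 0 < C)
    (hq : ((n : ℝ) + α) / ((n : ℝ) - α) ≤ q) (hv : ∀ x, 0 < v x) (huL : MemLalpha n α u)
    (hu : Differentiable ℝ u) (hvc : Continuous v)
    (hequ : IsFracLap n α C u
      (fun x => ‖x‖ ^ (((n : ℝ) - α) * q - ((n : ℝ) + α)) * v x ^ q))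
    (hgrowth : Tendsto (fun x : EuclideanSpace ℝ (Fin n) => ‖x‖ ^ ((n : ℝ) - α) * u x)
      (comap (fun x : EuclideanSpace ℝ (Fin n) => ‖x‖) atTop) atTop) :
    IsHenonComponent α C⁻¹ q u v where
  mem_Ioo := hα
  lt_finrank := by rwa [finrank_euclideanSpace_fin]
  const_pos := inv_pos.2 hC
  le_exponent := by rwa [finrank_euclideanSpace_fin]
  rhs_pos := hv
  differentiable := hu
  rhs_continuous := hvc
  fracIntegrableAt := .of_integrable hα.1 hu.continuous.aestronglyMeasurable
    (by rwa [finrank_euclideanSpace_fin])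
  hasFracLapAt x := by
    rw [finrank_euclideanSpace_fin]
    exact hasFracLapAt_of_isFracLap hC.ne' hequ x
  growth := by rwa [finrank_euclideanSpace_fin]

theorem radial_symmetry_fractional_henon_general {n : ℕ} [NeZero n] (α C q r : ℝ)
    (hα : α ∈ Ioo (0 : ℝ) 2) (hnα : α < (n : ℝ)) (hC : 0 < C)
    (hq : ((n : ℝ) + α) / ((n : ℝ) - α) ≤ q) (hr : ((n : ℝ) + α) / ((n : ℝ) - α) ≤ r)
    (u v : EuclideanSpace ℝ (Fin n) → ℝ)
    (hupos : ∀ x, 0 < u x) (hvpos : ∀ x, 0 < v x)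
    (huL : MemLalpha n α u) (hvL : MemLalpha n α v)
    (hu : Differentiable ℝ u) (hv : Differentiable ℝ v)
    (hequ : IsFracLap n α C u
      (fun x => ‖x‖ ^ (((n : ℝ) - α) * q - ((n : ℝ) + α)) * v x ^ q))
    (heqv : IsFracLap n α C v
      (fun x => ‖x‖ ^ (((n : ℝ) - α) * r - ((n : ℝ) + α)) * u x ^ r))
    (hgru : Tendsto (fun x : EuclideanSpace ℝ (Fin n) => ‖x‖ ^ ((n : ℝ) - α) * u x)
      (comap (fun x : EuclideanSpace ℝ (Fin n) => ‖x‖) atTop) atTop)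
    (hgrv : Tendsto (fun x : EuclideanSpace ℝ (Fin n) => ‖x‖ ^ ((n : ℝ) - α) * v x)
      (comap (fun x : EuclideanSpace ℝ (Fin n) => ‖x‖) atTop) atTop)
    (x y : EuclideanSpace ℝ (Fin n)) (hxy : ‖x‖ = ‖y‖) : u x = u y ∧ v x = v y := by
  have Hu : IsHenonComponent α C⁻¹ q u v :=
    isHenonComponent_of_isFracLap hα hnα hC hq hvpos huL hu hv.continuous hequ hgru
  have Hv : IsHenonComponent α C⁻¹ r v u :=
    isHenonComponent_of_isFracLap hα hnα hC hr hupos hvL hv hu.continuous heqv hgrv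
  exact ⟨Hu.eq_of_norm_eq Hv hxy, Hv.eq_of_norm_eq Hu hxy⟩

end MovingSpheres

/-- Radial symmetry for the fractional Hénon system (Theorem 1.3):
`(−Δ)^{α/2}u = |x|^{σ₁}v^q`, `(−Δ)^{α/2}v = |x|^{σ₂}u^r` with
`σ₁ = (n−α)q − (n+α)`, `σ₂ = (n−α)r − (n+α)`; under the growth condition
`|x|^{n−α}u(x) → ∞`, `|x|^{n−α}v(x) → ∞`, solutions are radially symmetric
about the origin. -/
theorem radial_symmetry_fractional_henon {n : ℕ} [NeZero n] (α C q r : ℝ)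
    (hα : α ∈ Ioo (0 : ℝ) 2) (hnα : α < (n : ℝ)) (hC : 0 < C)
    (hq : ((n : ℝ) + α) / ((n : ℝ) - α) < q) (hr : ((n : ℝ) + α) / ((n : ℝ) - α) < r)
    (u v : EuclideanSpace ℝ (Fin n) → ℝ)
    (hupos : ∀ x, 0 < u x) (hvpos : ∀ x, 0 < v x)
    (huL : MemLalpha n α u) (hvL : MemLalpha n α v)
    (huC : C11loc u) (hvC : C11loc v)
    (hequ : IsFracLap n α C u
      (fun x => ‖x‖ ^ (((n : ℝ) - α) * q - ((n : ℝ) + α)) * v x ^ q))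
    (heqv : IsFracLap n α C v
      (fun x => ‖x‖ ^ (((n : ℝ) - α) * r - ((n : ℝ) + α)) * u x ^ r))
    -- (vi) growth at infinity
    (hgru : Tendsto (fun x : EuclideanSpace ℝ (Fin n) => ‖x‖ ^ ((n : ℝ) - α) * u x)
      (comap (fun x : EuclideanSpace ℝ (Fin n) => ‖x‖) atTop) atTop)
    (hgrv : Tendsto (fun x : EuclideanSpace ℝ (Fin n) => ‖x‖ ^ ((n : ℝ) - α) * v x)
      (comap (fun x : EuclideanSpace ℝ (Fin n) => ‖x‖) atTop) atTop) :
    ∀ x y : EuclideanSpace ℝ (Fin n), ‖x‖ = ‖y‖ → u x = u y ∧ v x = v y := by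
  exact radial_symmetry_fractional_henon_general α C q r hα hnα hC hq.le hr.le u v hupos hvpos
    huL hvL (huC.1.differentiable one_ne_zero) (hvC.1.differentiable one_ne_zero) hequ heqv
    hgru hgrv
end
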